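/- arXiv:0708.2227 — 2 statements merged into one kernel-verified Lean document; each statement's English description precedes it below -/
import Mathlib

section
/- Let (S, 𝒮) be a measurable space, P a probability measure on S, and X_1, …, X_n i.i.d. with law P. Let B be a separable Banach space of type 2 with constant C, i.e. for every finite sequence x_1, …, x_N ∈ B and independent Rademacher variables ε_1, …, ε_N (with P(ε_i = 1) = P(ε_i = −1) = 1/2), E‖Σ_{i=1}^N ε_i x_i‖² ≤ C Σ_{i=1}^N ‖x_i‖². Let H : S^k → B be a bounded, strongly measurable function, symmetric in its entries and P-canonical (i.e. ∫_S H(x_1, …, x_{k−1}, y) dP(y) = 0 for all x_1, …, x_{k−1} ∈ S), and let κ ≥ sup_{x_1,…,x_k ∈ S} ‖H(x_1, …, x_k)‖. Then there exist constants λ_0 and D depending only on k and C such that for all n ≥ k and all x ≥ 0, Pr{ ‖ Σ_{(i_1,…,i_k) ∈ I_n^k} H(X_{i_1}, …, X_{i_k}) ‖ ≥ x } ≤ D exp{ −(x/(λ_0 n^{k/2} κ))^{2/k} }. -/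
/-!
Integrating out one coordinate of a canonical kernel gives zero, so by convexity of `‖·‖ ^ p` each
coordinate can be given an independent multiplier `±2`, one coordinate at a time. This bounds the
moments of the `U`-statistic by those of a Rademacher chaos with coefficients bounded by `κ`.
Averaging over random colourings `{1, …, n} → {1, …, k}` decouples the chaos, and `k` applications
of the Khintchine inequality, a consequence of type 2 and of bounded differences on the discrete
cube, bound its moment of order `2 q` by `(A n ^ k κ ^ 2 q ^ k) ^ q`, with `A` depending only on
`k` and `C`. Markov's inequality with `q` close to `(x / (λ₀ n ^ (k / 2) κ)) ^ (2 / k)` gives the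
tail bound.
-/

open MeasureTheory Finset
open scoped ENNReal
noncomputable section

/-- The set of `k`-tuples of pairwise distinct indices from `{1, …, n}`. -/
def injTuples (k n : ℕ) : Finset (Fin k → Fin n) :=
  Finset.univ.filter Function.Injective

open Function
open scoped BigOperators

section FiniteAverages

lemma expect_fin_cons {α : Type*} [Fintype α] {n : ℕ} (f : (Fin (n + 1) → α) → ℝ) :
    𝔼 e, f e = 𝔼 b, 𝔼 e : Fin n → α, f (Fin.cons b e) := by
  rw [← Finset.expect_product' univ univ fun b e => f (Fin.cons b e), univ_product_univ]
  exact (Fintype.expect_equiv (Fin.consEquiv fun _ => α) _ _ fun _ => rfl).symm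

lemma expect_bool (f : Bool → ℝ) : 𝔼 b, f b = (f true + f false) / 2 := by
  rw [Fintype.expect_eq_sum_div_card, Fintype.sum_bool, Fintype.card_bool, Nat.cast_ofNat]

lemma expect_update {ι α : Type*} [Fintype ι] [DecidableEq ι] [Fintype α] [Nonempty α] (l : ι)
    (f : (ι → α) → ℝ) : 𝔼 e, 𝔼 b, f (update e l b) = 𝔼 e, f e := by
  have swap_involutive : Involutive fun p : (ι → α) × α => (update p.1 l p.2, p.1 l) := by
    intro p
    simp
  calc 𝔼 e, 𝔼 b, f (update e l b)
      = 𝔼 p : (ι → α) × α, f (update p.1 l p.2) := by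
        rw [← univ_product_univ, Finset.expect_product]
    _ = 𝔼 p : (ι → α) × α, f p.1 :=
        Fintype.expect_equiv swap_involutive.toPerm _ _ fun _ => rfl
    _ = 𝔼 e, f e := by
        simp only [← univ_product_univ, Finset.expect_product, Fintype.expect_const]

lemma expect_comp_injective {ι κ α : Type*} [Fintype ι] [DecidableEq ι] [Fintype κ]
    [DecidableEq κ] [Fintype α] [Nonempty α] {i : κ → ι} (hi : Injective i) (f : (κ → α) → ℝ) :
    𝔼 e : ι → α, f (e ∘ i) = 𝔼 e, f e := by
  classical
  let split : ι ≃ κ ⊕ ((Set.range i)ᶜ : Set ι) :=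
    (Equiv.Set.sumCompl _).symm.trans (Equiv.sumCongr (Equiv.ofInjective i hi).symm (Equiv.refl _))
  have split_apply (j : κ) : split.symm (.inl j) = i j := by simp [split]
  calc 𝔼 e : ι → α, f (e ∘ i)
      = 𝔼 p : (κ → α) × (((Set.range i)ᶜ : Set ι) → α), f p.1 := by
        refine Fintype.expect_equiv
          ((split.arrowCongr (Equiv.refl α)).trans (Equiv.sumArrowEquivProdArrow _ _ _)) _ _
          fun e => congrArg f ?_
        funext j
        simp [split_apply]
    _ = 𝔼 e, f e := by
        simp only [← univ_product_univ, Finset.expect_product, Fintype.expect_const]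

lemma expect_pow_le {ι : Type*} [Fintype ι] [Nonempty ι] {f : ι → ℝ} (hf : ∀ i, 0 ≤ f i)
    (p : ℕ) : (𝔼 i, f i) ^ p ≤ 𝔼 i, f i ^ p := by
  have jensen := Real.pow_arith_mean_le_arith_mean_pow (univ : Finset ι)
    (fun _ => (Fintype.card ι : ℝ)⁻¹) f (fun _ _ => by positivity) (by simp) (fun i _ => hf i) p
  rwa [← Finset.mul_sum, ← Finset.mul_sum, ← div_eq_inv_mul, ← div_eq_inv_mul,
    ← Fintype.expect_eq_sum_div_card, ← Fintype.expect_eq_sum_div_card] at jensen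

lemma norm_sum_expect_smul_le {B ι κ : Type*} [SeminormedAddCommGroup B] [NormedSpace ℝ B]
    [Fintype ι] [Fintype κ] (w : κ → ι → ℝ) (t : ι → B) :
    ‖∑ i, (𝔼 c, w c i) • t i‖ ≤ 𝔼 c, ‖∑ i, w c i • t i‖ := by
  have average : ∑ i, (𝔼 c, w c i) • t i = (Fintype.card κ : ℝ)⁻¹ • ∑ c, ∑ i, w c i • t i := by
    rw [Finset.sum_comm, Finset.smul_sum]
    refine Finset.sum_congr rfl fun i _ => ?_
    rw [Fintype.expect_eq_sum_div_card, ← Finset.sum_smul, smul_smul, div_eq_inv_mul]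
  rw [average, norm_smul, Real.norm_of_nonneg (by positivity), Fintype.expect_eq_sum_div_card,
    div_eq_inv_mul]
  gcongr
  exact norm_sum_le _ _

end FiniteAverages

section BoundedDifferences

lemma half_exp_add_exp_le {a b c : ℝ} (h : |a - b| ≤ 2 * c) :
    (Real.exp a + Real.exp b) / 2 ≤ Real.exp ((a + b) / 2 + c ^ 2 / 2) := by
  have factor : (Real.exp a + Real.exp b) / 2 =
      Real.exp ((a + b) / 2) * Real.cosh ((a - b) / 2) := by
    rw [Real.cosh_eq, mul_div_assoc', mul_add, ← Real.exp_add, ← Real.exp_add]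
    ring_nf
  have half_sq : ((a - b) / 2) ^ 2 ≤ c ^ 2 := by
    obtain ⟨hl, hu⟩ := abs_le.1 h
    exact sq_le_sq' (by linarith) (by linarith)
  rw [factor, Real.exp_add]
  gcongr
  exact (Real.cosh_le_exp_half_sq _).trans (by gcongr)

lemma expect_exp_le_of_bounded_differences {n : ℕ} {c : Fin n → ℝ} {f : (Fin n → Bool) → ℝ}
    (hf : ∀ e i b b', f (update e i b) - f (update e i b') ≤ 2 * c i) :
    𝔼 e, Real.exp (f e) ≤ Real.exp (𝔼 e, f e + (∑ i, c i ^ 2) / 2) := by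
  induction n with
  | zero => simp
  | succ n ih =>
    set m : Bool → ℝ := fun b => 𝔼 e : Fin n → Bool, f (Fin.cons b e)
    set V : ℝ := ∑ i : Fin n, c i.succ ^ 2
    have tail (b : Bool) :
        𝔼 e : Fin n → Bool, Real.exp (f (Fin.cons b e)) ≤ Real.exp (m b + V / 2) := by
      refine ih fun e i b₁ b₂ => ?_
      simpa only [Fin.cons_update] using hf (Fin.cons b e) i.succ b₁ b₂
    have head (b b' : Bool) : m b - m b' ≤ 2 * c 0 := by
      rw [← Finset.expect_sub_distrib]
      refine Finset.expect_le univ_nonempty fun e _ => ?_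
      simpa only [Fin.update_cons_zero] using hf (Fin.cons b e) 0 b b'
    calc 𝔼 e, Real.exp (f e)
        ≤ 𝔼 b, Real.exp (m b + V / 2) := by
          rw [expect_fin_cons]
          exact Finset.expect_le_expect fun b _ => tail b
      _ ≤ Real.exp ((m true + V / 2 + (m false + V / 2)) / 2 + c 0 ^ 2 / 2) := by
          rw [expect_bool]
          refine half_exp_add_exp_le (abs_le.2 ⟨?_, ?_⟩)
          · linarith [head false true]
          · linarith [head true false]
      _ = Real.exp (𝔼 e, f e + (∑ i, c i ^ 2) / 2) := by
          rw [expect_fin_cons, expect_bool, Fin.sum_univ_succ]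
          congr 1
          ring

end BoundedDifferences

section Type2

variable {B : Type*} [NormedAddCommGroup B] [NormedSpace ℝ B] {C : ℝ}

/-- The Rademacher sign encoded by a boolean, so that uniform averages over `ι → Bool` are
expectations over independent Rademacher variables indexed by `ι`. -/
def boolSign (b : Bool) : ℝ := if b then 1 else -1

lemma boolSign_sub_le (b b' : Bool) : |boolSign b - boolSign b'| ≤ 2 := by
  cases b <;> cases b' <;> norm_num [boolSign]

/-- The normed space `B` has type 2 with constant `C`; the Rademacher average is written out as a
sum over the `2 ^ N` sign patterns. -/
def IsType2 (B : Type*) [NormedAddCommGroup B] [NormedSpace ℝ B] (C : ℝ) : Prop :=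
  ∀ (N : ℕ) (x : Fin N → B),
    ((2 : ℝ) ^ N)⁻¹ * ∑ ε : Fin N → Bool, ‖∑ i, (if ε i then x i else -x i)‖ ^ 2 ≤
      C * ∑ i, ‖x i‖ ^ 2

/-- The constant in the Khintchine inequality for spaces of type 2 with constant `C`. -/
def khintchineConst (C : ℝ) : ℝ := Real.exp (2 * √C + 1)

lemma IsType2.expect_norm_sq_le (hB : IsType2 B C) {n : ℕ} (v : Fin n → B) :
    𝔼 e : Fin n → Bool, ‖∑ i, boolSign (e i) • v i‖ ^ 2 ≤ C * ∑ i, ‖v i‖ ^ 2 := by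
  have sign_smul (b : Bool) (x : B) : boolSign b • x = if b then x else -x := by
    cases b <;> simp [boolSign]
  simpa [Fintype.expect_eq_sum_div_card, div_eq_inv_mul, sign_smul] using hB n v

lemma IsType2.expect_norm_le (hB : IsType2 B C) {n : ℕ} (v : Fin n → B) :
    𝔼 e : Fin n → Bool, ‖∑ i, boolSign (e i) • v i‖ ≤ √(C * ∑ i, ‖v i‖ ^ 2) :=
  Real.le_sqrt_of_sq_le <|
    (expect_pow_le (fun _ => norm_nonneg _) 2).trans (hB.expect_norm_sq_le v)

lemma expect_exp_norm_le {n : ℕ} (v : Fin n → B) {t : ℝ} (ht : 0 ≤ t) :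
    𝔼 e : Fin n → Bool, Real.exp (t * ‖∑ i, boolSign (e i) • v i‖) ≤
      Real.exp (t * (𝔼 e : Fin n → Bool, ‖∑ i, boolSign (e i) • v i‖) +
        t ^ 2 * (∑ i, ‖v i‖ ^ 2) / 2) := by
  have sum_update (e : Fin n → Bool) (i : Fin n) (b b' : Bool) :
      ∑ j, boolSign (update e i b j) • v j - ∑ j, boolSign (update e i b' j) • v j =
        (boolSign b - boolSign b') • v i := by
    rw [← Finset.sum_sub_distrib, Fintype.sum_eq_single i]
    · simp [sub_smul]
    · intro j hj
      simp [hj]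
  refine (expect_exp_le_of_bounded_differences (c := fun i => t * ‖v i‖)
    fun e i b b' => ?_).trans_eq ?_
  · calc t * ‖∑ j, boolSign (update e i b j) • v j‖ -
          t * ‖∑ j, boolSign (update e i b' j) • v j‖
        ≤ t * (|boolSign b - boolSign b'| * ‖v i‖) := by
          rw [← mul_sub, ← Real.norm_eq_abs, ← norm_smul, ← sum_update]
          exact mul_le_mul_of_nonneg_left (norm_sub_norm_le _ _) ht
      _ ≤ t * (2 * ‖v i‖) := by
          gcongr
          exact boolSign_sub_le b b'
      _ = 2 * (t * ‖v i‖) := by ring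
  · simp only [← Finset.mul_expect, mul_pow, ← Finset.mul_sum]

lemma IsType2.expect_exp_norm_le (hB : IsType2 B C) {n : ℕ} (v : Fin n → B) {t : ℝ}
    (ht : 0 ≤ t) :
    𝔼 e : Fin n → Bool, Real.exp (t * ‖∑ i, boolSign (e i) • v i‖) ≤
      Real.exp (√C * (t * √(∑ i, ‖v i‖ ^ 2)) + (t * √(∑ i, ‖v i‖ ^ 2)) ^ 2 / 2) := by
  have hV : 0 ≤ ∑ i, ‖v i‖ ^ 2 := by positivity
  have mean_le := hB.expect_norm_le v
  rw [Real.sqrt_mul' C hV] at mean_le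
  refine (_root_.expect_exp_norm_le v ht).trans ?_
  rw [mul_left_comm, mul_pow, Real.sq_sqrt hV]
  gcongr

lemma pow_le_mul_exp {p : ℕ} {t x : ℝ} (hp : p ≠ 0) (ht : 0 < t) (hx : 0 ≤ x) :
    x ^ p ≤ (p / t) ^ p * Real.exp (t * x) := by
  calc x ^ p = (p / t) ^ p * (t * x / p) ^ p := by
        rw [← mul_pow]
        congr 1
        field_simp
    _ ≤ (p / t) ^ p * Real.exp (t * x / p) ^ p := by
        gcongr
        linarith [Real.add_one_le_exp (t * x / p)]
    _ = (p / t) ^ p * Real.exp (t * x) := by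
        rw [← Real.exp_nat_mul]
        congr 2
        field_simp

theorem IsType2.expect_norm_pow_le (hB : IsType2 B C) {n : ℕ} (v : Fin n → B) (q : ℕ) :
    𝔼 e : Fin n → Bool, ‖∑ i, boolSign (e i) • v i‖ ^ (2 * q) ≤
      (khintchineConst C * (2 * q) * ∑ i, ‖v i‖ ^ 2) ^ q := by
  rcases q.eq_zero_or_pos with rfl | hq
  · simp
  set V := ∑ i, ‖v i‖ ^ 2
  have hV_nonneg : 0 ≤ V := by positivity
  rcases hV_nonneg.eq_or_lt with hV_zero | hV_pos
  · have hv (i : Fin n) : v i = 0 := by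
      have := (Fintype.sum_eq_zero_iff_of_nonneg fun i => sq_nonneg ‖v i‖).1 hV_zero.symm
      simpa using congrFun this i
    simp [← hV_zero, hq.ne', hv]
  -- This `t` minimises `(2 * q / t) ^ (2 * q) * exp (t ^ 2 * V / 2)`.
  set t := √(2 * q) / √V with ht
  have ht_pos : 0 < t := by positivity
  have t_mul_sqrt : t * √V = √(2 * q) := div_mul_cancel₀ _ (by positivity)
  have div_t_sq : ((2 * q : ℕ) / t) ^ 2 = 2 * q * V := by
    rw [div_pow, ht, div_pow, Real.sq_sqrt (by positivity), Real.sq_sqrt hV_nonneg]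
    push_cast
    field_simp
  have sqrt_le : √(2 * q) ≤ 2 * q := by
    have : (1 : ℝ) ≤ q := by exact_mod_cast hq
    exact Real.sqrt_le_self_iff.2 (.inr (by linarith))
  calc 𝔼 e : Fin n → Bool, ‖∑ i, boolSign (e i) • v i‖ ^ (2 * q)
      ≤ 𝔼 e : Fin n → Bool,
          (2 * q * V) ^ q * Real.exp (t * ‖∑ i, boolSign (e i) • v i‖) := by
        refine Finset.expect_le_expect fun e _ => ?_
        rw [← div_t_sq, ← pow_mul]
        exact pow_le_mul_exp (by omega) ht_pos (norm_nonneg _)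
    _ ≤ (2 * q * V) ^ q * Real.exp (√C * √(2 * q) + √(2 * q) ^ 2 / 2) := by
        rw [← Finset.mul_expect, ← t_mul_sqrt]
        gcongr
        exact hB.expect_exp_norm_le v ht_pos.le
    _ ≤ (2 * q * V) ^ q * Real.exp (q * (2 * √C + 1)) := by
        rw [Real.sq_sqrt (by positivity)]
        gcongr
        linarith [mul_le_mul_of_nonneg_left sqrt_le C.sqrt_nonneg]
    _ = (khintchineConst C * (2 * q) * V) ^ q := by
        rw [Real.exp_nat_mul, ← mul_pow, khintchineConst]
        ring

end Type2

section Chaos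

variable {B : Type*} [NormedAddCommGroup B] [NormedSpace ℝ B] {C κ : ℝ} {k n : ℕ}

lemma IsType2.expect_norm_pow_le_expect [NeZero n] (hB : IsType2 B C) (v : Fin n → B) (q : ℕ) :
    𝔼 e : Fin n → Bool, ‖∑ l, boolSign (e l) • v l‖ ^ (2 * q) ≤
      (khintchineConst C * (2 * q) * n) ^ q * 𝔼 l, ‖v l‖ ^ (2 * q) := by
  have hK : 0 < khintchineConst C := Real.exp_pos _
  have power_mean : (𝔼 l, ‖v l‖ ^ 2) ^ q ≤ 𝔼 l, ‖v l‖ ^ (2 * q) := by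
    simpa only [pow_mul] using expect_pow_le (fun l => sq_nonneg ‖v l‖) q
  have sum_eq : ∑ l, ‖v l‖ ^ 2 = n * 𝔼 l, ‖v l‖ ^ 2 := by
    rw [← Fintype.card_mul_expect, Fintype.card_fin]
  calc 𝔼 e : Fin n → Bool, ‖∑ l, boolSign (e l) • v l‖ ^ (2 * q)
      ≤ (khintchineConst C * (2 * q) * ∑ l, ‖v l‖ ^ 2) ^ q := hB.expect_norm_pow_le v q
    _ = (khintchineConst C * (2 * q) * n) ^ q * (𝔼 l, ‖v l‖ ^ 2) ^ q := by
        rw [sum_eq, ← mul_assoc, mul_pow]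
    _ ≤ (khintchineConst C * (2 * q) * n) ^ q * 𝔼 l, ‖v l‖ ^ (2 * q) := by gcongr

lemma decoupledChaos_cons (a : (Fin (k + 1) → Fin n) → B) (b : Fin n → Bool)
    (e : Fin k → Fin n → Bool) :
    ∑ i, (∏ j, boolSign ((Fin.cons b e : Fin (k + 1) → Fin n → Bool) j (i j))) • a i =
      ∑ l, boolSign (b l) • ∑ i, (∏ j, boolSign (e j (i j))) • a (Fin.cons l i) := by
  rw [← Fintype.sum_equiv (Fin.consEquiv fun _ => Fin n) _ _ fun _ => rfl, Fintype.sum_prod_type]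
  simp [Fin.consEquiv, Fin.prod_univ_succ, mul_smul, Finset.smul_sum]

theorem IsType2.expect_norm_decoupledChaos_pow_le [NeZero n] (hB : IsType2 B C) (q : ℕ)
    {a : (Fin k → Fin n) → B} (ha : ∀ i, ‖a i‖ ≤ κ) :
    𝔼 e : Fin k → Fin n → Bool, ‖∑ i, (∏ j, boolSign (e j (i j))) • a i‖ ^ (2 * q) ≤
      ((khintchineConst C * (2 * q) * n) ^ k * κ ^ 2) ^ q := by
  have hK : 0 < khintchineConst C := Real.exp_pos _
  induction k with
  | zero =>
    simp only [univ_unique, univ_eq_empty, prod_empty, one_smul, sum_singleton,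
      singleton_nonempty, expect_const, pow_zero, one_mul]
    rw [← pow_mul]
    gcongr
    exact ha _
  | succ k ih =>
    let v (e : Fin k → Fin n → Bool) (l : Fin n) : B :=
      ∑ i, (∏ j, boolSign (e j (i j))) • a (Fin.cons l i)
    calc 𝔼 e : Fin (k + 1) → Fin n → Bool, ‖∑ i, (∏ j, boolSign (e j (i j))) • a i‖ ^ (2 * q)
        = 𝔼 e, 𝔼 b : Fin n → Bool, ‖∑ l, boolSign (b l) • v e l‖ ^ (2 * q) := by
          rw [expect_fin_cons, Finset.expect_comm]
          simp only [decoupledChaos_cons, v]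
      _ ≤ 𝔼 e, (khintchineConst C * (2 * q) * n) ^ q * 𝔼 l, ‖v e l‖ ^ (2 * q) :=
          Finset.expect_le_expect fun e _ => hB.expect_norm_pow_le_expect (v e) q
      _ = (khintchineConst C * (2 * q) * n) ^ q * 𝔼 l, 𝔼 e, ‖v e l‖ ^ (2 * q) := by
          rw [← Finset.mul_expect, Finset.expect_comm]
      _ ≤ (khintchineConst C * (2 * q) * n) ^ q *
            ((khintchineConst C * (2 * q) * n) ^ k * κ ^ 2) ^ q := by
          gcongr
          exact Finset.expect_le univ_nonempty fun l _ => ih fun i => ha (Fin.cons l i)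
      _ = ((khintchineConst C * (2 * q) * n) ^ (k + 1) * κ ^ 2) ^ q := by
          rw [← mul_pow, ← mul_assoc, ← pow_succ']

lemma expect_section_eq_ite [NeZero k] (i : Fin k → Fin n) :
    𝔼 c : Fin n → Fin k, (if c ∘ i = id then 1 else 0 : ℝ) =
      if Injective i then ((k : ℝ) ^ k)⁻¹ else 0 := by
  split_ifs with hi
  · rw [expect_comp_injective hi fun d => if d = id then (1 : ℝ) else 0, Fintype.expect_ite_eq']
    simp [NNRat.smul_def]
  · exact Finset.expect_eq_zero fun c _ =>
      if_neg fun hc => hi (LeftInverse.injective (congrFun hc))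

-- Decoupling: a uniformly random colouring `c` satisfies `c (i j) = j` for all `j` with the same
-- probability `k ^ (-k)` for each injective `i`, and with probability `0` otherwise.
lemma norm_sum_injTuples_le [NeZero k] (t : (Fin k → Fin n) → B) :
    ‖∑ i ∈ injTuples k n, t i‖ ≤ (k : ℝ) ^ k *
      𝔼 c : Fin n → Fin k, ‖∑ i, (if c ∘ i = id then 1 else 0 : ℝ) • t i‖ := by
  have sum_eq : ∑ i ∈ injTuples k n, t i = (k : ℝ) ^ k •
      ∑ i, (𝔼 c : Fin n → Fin k, (if c ∘ i = id then 1 else 0 : ℝ)) • t i := by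
    have hk : ((k : ℝ) ^ k) ≠ 0 := pow_ne_zero _ (NeZero.ne _)
    simp [expect_section_eq_ite, injTuples, Finset.sum_filter, Finset.smul_sum, hk]
  rw [sum_eq, norm_smul, Real.norm_of_nonneg (by positivity)]
  gcongr
  exact norm_sum_expect_smul_le _ t

lemma expect_diagonal (c : Fin n → Fin k) (f : (Fin n → Bool) → ℝ) :
    𝔼 e : Fin k → Fin n → Bool, f (fun l => e (c l) l) = 𝔼 e, f e := by
  rw [← expect_comp_injective (i := fun l => (c l, l)) (fun l l' h => congrArg Prod.snd h) f]
  exact (Fintype.expect_equiv (Equiv.curry (Fin k) (Fin n) Bool) _ _ fun _ => rfl).symm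

lemma IsType2.expect_norm_colored_chaos_pow_le [NeZero n] (hB : IsType2 B C) (q : ℕ)
    {a : (Fin k → Fin n) → B} (ha : ∀ i, ‖a i‖ ≤ κ) (c : Fin n → Fin k) :
    𝔼 e : Fin n → Bool, ‖∑ i, (if c ∘ i = id then 1 else 0 : ℝ) •
        (∏ j, boolSign (e (i j))) • a i‖ ^ (2 * q) ≤
      ((khintchineConst C * (2 * q) * n) ^ k * κ ^ 2) ^ q := by
  let a' (i : Fin k → Fin n) : B := (if c ∘ i = id then 1 else 0 : ℝ) • a i
  have ha' (i : Fin k → Fin n) : ‖a' i‖ ≤ κ := by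
    refine le_trans ?_ (ha i)
    dsimp only [a']
    split_ifs <;> simp
  refine le_of_eq_of_le ?_ (hB.expect_norm_decoupledChaos_pow_le q ha')
  rw [← expect_diagonal c]
  refine Finset.expect_congr rfl fun e _ => ?_
  congr 2
  refine Finset.sum_congr rfl fun i _ => ?_
  by_cases hc : c ∘ i = id
  · have color_eq (j : Fin k) : c (i j) = j := congrFun hc j
    simp [a', hc, color_eq]
  · simp [a', hc]

theorem IsType2.expect_norm_chaos_pow_le [NeZero k] [NeZero n] (hB : IsType2 B C) (q : ℕ)
    {a : (Fin k → Fin n) → B} (ha : ∀ i, ‖a i‖ ≤ κ) :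
    𝔼 e : Fin n → Bool, ‖∑ i ∈ injTuples k n, (∏ j, boolSign (e (i j))) • a i‖ ^ (2 * q) ≤
      (((k : ℝ) ^ k) ^ 2 * ((khintchineConst C * (2 * q) * n) ^ k * κ ^ 2)) ^ q := by
  let colored (c : Fin n → Fin k) (e : Fin n → Bool) : ℝ :=
    ‖∑ i, (if c ∘ i = id then 1 else 0 : ℝ) • (∏ j, boolSign (e (i j))) • a i‖
  calc 𝔼 e : Fin n → Bool, ‖∑ i ∈ injTuples k n, (∏ j, boolSign (e (i j))) • a i‖ ^ (2 * q)
      ≤ 𝔼 e, ((k : ℝ) ^ k * 𝔼 c, colored c e) ^ (2 * q) := by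
        refine Finset.expect_le_expect fun e _ => ?_
        gcongr
        exact norm_sum_injTuples_le _
    _ ≤ 𝔼 e, ((k : ℝ) ^ k) ^ (2 * q) * 𝔼 c, colored c e ^ (2 * q) := by
        refine Finset.expect_le_expect fun e _ => ?_
        rw [mul_pow]
        gcongr
        exact expect_pow_le (fun _ => norm_nonneg _) _
    _ = ((k : ℝ) ^ k) ^ (2 * q) * 𝔼 c, 𝔼 e, colored c e ^ (2 * q) := by
        rw [← Finset.mul_expect, Finset.expect_comm]
    _ ≤ ((k : ℝ) ^ k) ^ (2 * q) * ((khintchineConst C * (2 * q) * n) ^ k * κ ^ 2) ^ q := by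
        gcongr
        exact Finset.expect_le univ_nonempty fun c _ =>
          hB.expect_norm_colored_chaos_pow_le q ha c
    _ = (((k : ℝ) ^ k) ^ 2 * ((khintchineConst C * (2 * q) * n) ^ k * κ ^ 2)) ^ q := by
        rw [pow_mul, ← mul_pow]

end Chaos

section Resampling

variable {ι : Type*} {X : ι → Type*} [∀ l, MeasurableSpace (X l)] {μ : ∀ l, Measure (X l)}

lemma measurePreserving_update [Fintype ι] [DecidableEq ι] [∀ l, SigmaFinite (μ l)] (l : ι)
    [IsProbabilityMeasure (μ l)] :
    MeasurePreserving (fun p : (∀ l, X l) × X l => update p.1 l p.2)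
      ((Measure.pi μ).prod (μ l)) (Measure.pi μ) := by
  refine ⟨measurable_update', (Measure.pi_eq fun t ht => ?_).symm⟩
  have preimage_rectangle : (fun p : (∀ l, X l) × X l => update p.1 l p.2) ⁻¹' Set.univ.pi t =
      Set.univ.pi (update t l Set.univ) ×ˢ t l := by
    ext ⟨ω, y⟩
    simp only [Set.mem_preimage, Set.mem_univ_pi, Set.mem_prod,
      forall_update_iff ω fun i y => y ∈ t i, forall_update_iff t fun i u => ω i ∈ u,
      Set.mem_univ, true_and, and_comm]
  rw [Measure.map_apply measurable_update' (MeasurableSet.univ_pi ht), preimage_rectangle,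
    Measure.prod_prod, Measure.pi_pi, ← Finset.prod_erase_mul univ _ (mem_univ l),
    ← Finset.prod_erase_mul univ (fun i => μ i (t i)) (mem_univ l), update_self, measure_univ,
    mul_one]
  congr 1
  refine Finset.prod_congr rfl fun i hi => ?_
  rw [update_of_ne (Finset.ne_of_mem_erase hi)]

lemma integral_pi_le_of_integral_update_le [Fintype ι] [DecidableEq ι]
    [∀ l, SigmaFinite (μ l)] {g h : (∀ l, X l) → ℝ} (hg : Integrable g (Measure.pi μ))
    (hh : Integrable h (Measure.pi μ)) (l : ι) [IsProbabilityMeasure (μ l)]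
    (hgh : ∀ ω, ∫ y, g (update ω l y) ∂μ l ≤ ∫ y, h (update ω l y) ∂μ l) :
    ∫ ω, g ω ∂Measure.pi μ ≤ ∫ ω, h ω ∂Measure.pi μ := by
  have resample {f : (∀ l, X l) → ℝ} (hf : Integrable f (Measure.pi μ)) :
      Integrable (fun ω => ∫ y, f (update ω l y) ∂μ l) (Measure.pi μ) ∧
        ∫ ω, ∫ y, f (update ω l y) ∂μ l ∂Measure.pi μ = ∫ ω, f ω ∂Measure.pi μ := by
    have mp := measurePreserving_update (μ := μ) l
    have hf_prod := mp.integrable_comp_of_integrable hf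
    refine ⟨hf_prod.integral_prod_left, ?_⟩
    calc ∫ ω, ∫ y, f (update ω l y) ∂μ l ∂Measure.pi μ
        = ∫ p, f (update p.1 l p.2) ∂(Measure.pi μ).prod (μ l) := (integral_prod _ hf_prod).symm
      _ = ∫ ω, f ω ∂Measure.map (fun p => update p.1 l p.2) ((Measure.pi μ).prod (μ l)) :=
          (integral_map mp.aemeasurable (mp.map_eq.symm ▸ hf.aestronglyMeasurable)).symm
      _ = ∫ ω, f ω ∂Measure.pi μ := by rw [mp.map_eq]
  rw [← (resample hg).2, ← (resample hh).2]
  exact integral_mono (resample hg).1 (resample hh).1 hgh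

end Resampling

section Symmetrization

lemma integrable_expect {S τ : Type*} [MeasurableSpace S] {ν : Measure S} [Fintype τ]
    {g : τ → S → ℝ} (hg : ∀ i, Integrable (g i) ν) : Integrable (fun y => 𝔼 i, g i y) ν := by
  simp only [Fintype.expect_eq_sum_div_card]
  exact (integrable_finsetSum _ fun i _ => hg i).div_const _

lemma integral_expect {S τ : Type*} [MeasurableSpace S] {ν : Measure S} [Fintype τ]
    {g : τ → S → ℝ} (hg : ∀ i, Integrable (g i) ν) :
    ∫ y, 𝔼 i, g i y ∂ν = 𝔼 i, ∫ y, g i y ∂ν := by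
  simp only [Fintype.expect_eq_sum_div_card]
  rw [integral_div, integral_finsetSum _ fun i _ => hg i]

lemma integral_comp_add_le_of_convexOn {B S : Type*} [NormedAddCommGroup B] [NormedSpace ℝ B]
    [CompleteSpace B] [MeasurableSpace S] {ν : Measure S} [IsProbabilityMeasure ν] {Φ : B → ℝ}
    (hΦ : ConvexOn ℝ Set.univ Φ) (hΦ_cont : Continuous Φ) {u : B} {v : S → B}
    (hv : Integrable v ν) (hv_mean : ∫ y, v y ∂ν = 0)
    (hΦ_int : ∀ r : ℝ, Integrable (fun y => Φ (u + r • v y)) ν) :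
    ∫ y, Φ (u + v y) ∂ν ≤ 𝔼 b, ∫ y, Φ (u + (2 * boolSign b) • v y) ∂ν := by
  have jensen : Φ u ≤ ∫ y, Φ (u + (-2 : ℝ) • v y) ∂ν := by
    have mean : ∫ y, (u + (-2 : ℝ) • v y) ∂ν = u := by
      rw [integral_add (integrable_const u) (hv.fun_smul _), integral_smul, hv_mean]
      simp
    have := hΦ.map_integral_le hΦ_cont.continuousOn isClosed_univ (.of_forall fun _ => trivial)
      ((integrable_const u).add (hv.smul (-2 : ℝ))) (hΦ_int (-2))
    rwa [Pi.add_def, Pi.smul_def, mean] at this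
  have midpoint (y : S) : Φ (u + v y) ≤ (Φ (u + (2 : ℝ) • v y) + Φ u) / 2 := by
    have := hΦ.2 (Set.mem_univ (u + (2 : ℝ) • v y)) (Set.mem_univ u)
      (by norm_num : (0 : ℝ) ≤ 1 / 2) (by norm_num : (0 : ℝ) ≤ 1 / 2) (by norm_num)
    rw [show (1 / 2 : ℝ) • (u + (2 : ℝ) • v y) + (1 / 2 : ℝ) • u = u + v y by module,
      smul_eq_mul, smul_eq_mul] at this
    linarith
  calc ∫ y, Φ (u + v y) ∂ν
      ≤ ∫ y, (Φ (u + (2 : ℝ) • v y) + Φ u) / 2 ∂ν :=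
        integral_mono (by simpa using hΦ_int 1)
          (((hΦ_int 2).add (integrable_const _)).div_const 2) midpoint
    _ = (∫ y, Φ (u + (2 : ℝ) • v y) ∂ν + Φ u) / 2 := by
        rw [integral_div, integral_add (hΦ_int 2) (integrable_const _)]
        simp
    _ ≤ (∫ y, Φ (u + (2 : ℝ) • v y) ∂ν + ∫ y, Φ (u + (-2 : ℝ) • v y) ∂ν) / 2 := by gcongr
    _ = 𝔼 b, ∫ y, Φ (u + (2 * boolSign b) • v y) ∂ν := by
        rw [expect_bool]
        norm_num [boolSign]

lemma le_expect_two_mul_boolSign {ι : Type*} [Fintype ι] [DecidableEq ι] {J : (ι → ℝ) → ℝ}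
    (hJ : ∀ s l, J s ≤ 𝔼 b, J (update s l (2 * boolSign b * s l))) :
    J (fun _ => 1) ≤ 𝔼 e : ι → Bool, J fun l => 2 * boolSign (e l) := by
  let partialSigns (R : Finset ι) (e : ι → Bool) : ι → ℝ :=
    fun l => if l ∈ R then 2 * boolSign (e l) else 1
  have partial_le (R : Finset ι) : J (fun _ => 1) ≤ 𝔼 e, J (partialSigns R e) := by
    induction R using Finset.induction_on with
    | empty => simp [partialSigns]
    | insert l R hl ih =>
      have update_signs (e : ι → Bool) (b : Bool) :
          update (partialSigns R e) l (2 * boolSign b * partialSigns R e l) =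
            partialSigns (insert l R) (update e l b) := by
        funext l'
        by_cases h : l' = l
        · subst h
          simp [partialSigns, hl]
        · simp [partialSigns, h]
      calc J (fun _ => 1)
          ≤ 𝔼 e, J (partialSigns R e) := ih
        _ ≤ 𝔼 e, 𝔼 b, J (partialSigns (insert l R) (update e l b)) := by
            simp only [← update_signs]
            exact Finset.expect_le_expect fun e _ => hJ _ l
        _ = 𝔼 e, J (partialSigns (insert l R) e) :=
            expect_update l fun e => J (partialSigns (insert l R) e)
  simpa [partialSigns] using partial_le univ

end Symmetrization

section Randomization

variable {ι τ : Type*} {X : ι → Type*} {B : Type*} [NormedAddCommGroup B] [NormedSpace ℝ B] {κ : ℝ}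

/-- The function `f` on the product space is a measurable kernel in the coordinates `A`, and it is
canonical (completely degenerate): integrating out any single one of these coordinates gives `0`. -/
structure IsCanonical [DecidableEq ι] [∀ l, MeasurableSpace (X l)]
    (μ : ∀ l, Measure (X l)) (A : Finset ι) (f : (∀ l, X l) → B) : Prop where
  stronglyMeasurable : StronglyMeasurable f
  dependsOn : DependsOn f (A : Set ι)
  integral_update_eq_zero : ∀ l ∈ A, ∀ ω, ∫ y, f (update ω l y) ∂μ l = 0

/-- The sum of the kernels `f i`, `i ∈ T`, in which each coordinate `l` of the product space
carries the multiplier `s l`. Multipliers `1` give the sum itself, Rademacher multipliers its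
randomization. -/
def multiplierSum (T : Finset τ) (A : τ → Finset ι) (f : τ → (∀ l, X l) → B) (s : ι → ℝ)
    (ω : ∀ l, X l) : B :=
  ∑ i ∈ T, (∏ l ∈ A i, s l) • f i ω

variable {T : Finset τ} {A : τ → Finset ι} {f : τ → (∀ l, X l) → B}

lemma multiplierSum_update_mul [DecidableEq ι] (s : ι → ℝ) (l : ι) (r : ℝ) (ω : ∀ l, X l) :
    multiplierSum T A f (update s l (r * s l)) ω =
      multiplierSum {i ∈ T | l ∉ A i} A f s ω + r • multiplierSum {i ∈ T | l ∈ A i} A f s ω := by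
  rw [multiplierSum, ← Finset.sum_filter_not_add_sum_filter T (l ∈ A ·), multiplierSum,
    multiplierSum, Finset.smul_sum]
  congr 1 <;> refine Finset.sum_congr rfl fun i hi => ?_
  · rw [Finset.prod_update_of_notMem (mem_filter.1 hi).2]
  · have hl := (mem_filter.1 hi).2
    rw [Finset.prod_update_of_mem hl, mul_assoc, mul_smul, sdiff_singleton_eq_erase,
      Finset.mul_prod_erase _ _ hl]

lemma norm_multiplierSum_le (hf : ∀ i ω, ‖f i ω‖ ≤ κ) (s : ι → ℝ) (ω : ∀ l, X l) :
    ‖multiplierSum T A f s ω‖ ≤ ∑ i ∈ T, ‖∏ l ∈ A i, s l‖ * κ := by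
  refine (norm_sum_le _ _).trans (Finset.sum_le_sum fun i _ => ?_)
  rw [norm_smul]
  gcongr
  exact hf i ω

variable [∀ l, MeasurableSpace (X l)] {μ : ∀ l, Measure (X l)}

lemma stronglyMeasurable_multiplierSum (hf : ∀ i ∈ T, StronglyMeasurable (f i)) (s : ι → ℝ) :
    StronglyMeasurable (multiplierSum T A f s) :=
  Finset.stronglyMeasurable_fun_sum T fun i hi => (hf i hi).const_smul _

lemma integrable_norm_multiplierSum_pow {Ω : Type*} [MeasurableSpace Ω] {ν : Measure Ω}
    [IsFiniteMeasure ν] {g : Ω → ∀ l, X l} (hg : Measurable g)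
    (hf : ∀ i ∈ T, StronglyMeasurable (f i)) (hκ : ∀ i ω, ‖f i ω‖ ≤ κ) (s : ι → ℝ) (p : ℕ) :
    Integrable (fun y => ‖multiplierSum T A f s (g y)‖ ^ p) ν :=
  MemLp.integrable_norm_pow' <| .of_bound
    ((stronglyMeasurable_multiplierSum hf s).comp_measurable hg).aestronglyMeasurable _
    (.of_forall fun y => norm_multiplierSum_le hκ s (g y))

lemma multiplierSum_update_of_notMem [DecidableEq ι] {l : ι}
    (hf : ∀ i ∈ T, IsCanonical μ (A i) (f i)) (hl : ∀ i ∈ T, l ∉ A i) (s : ι → ℝ)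
    (ω : ∀ l, X l) (y : X l) :
    multiplierSum T A f s (update ω l y) = multiplierSum T A f s ω := by
  refine Finset.sum_congr rfl fun i hi => ?_
  rw [(hf i hi).dependsOn fun l' hl' => update_of_ne (ne_of_mem_of_not_mem hl' (hl i hi)) y ω]

lemma integral_multiplierSum_update_eq_zero [DecidableEq ι] {l : ι} [IsFiniteMeasure (μ l)]
    (hf : ∀ i ∈ T, IsCanonical μ (A i) (f i)) (hκ : ∀ i ω, ‖f i ω‖ ≤ κ)
    (hl : ∀ i ∈ T, l ∈ A i) (s : ι → ℝ) (ω : ∀ l, X l) :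
    ∫ y, multiplierSum T A f s (update ω l y) ∂μ l = 0 := by
  have f_integrable (i : τ) (hi : i ∈ T) : Integrable (fun y => f i (update ω l y)) (μ l) :=
    .of_bound ((hf i hi).stronglyMeasurable.comp_measurable
      (measurable_update ω)).aestronglyMeasurable κ (.of_forall fun y => hκ i _)
  unfold multiplierSum
  rw [integral_finsetSum T fun i hi => (f_integrable i hi).fun_smul _]
  refine Finset.sum_eq_zero fun i hi => ?_
  rw [integral_smul, (hf i hi).integral_update_eq_zero l (hl i hi), smul_zero]

lemma integral_norm_multiplierSum_update_pow_le_expect [CompleteSpace B] [DecidableEq ι] {l : ι}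
    [IsProbabilityMeasure (μ l)] (hf : ∀ i ∈ T, IsCanonical μ (A i) (f i))
    (hκ : ∀ i ω, ‖f i ω‖ ≤ κ) (p : ℕ) (s : ι → ℝ) (ω : ∀ l, X l) :
    ∫ y, ‖multiplierSum T A f s (update ω l y)‖ ^ p ∂μ l ≤
      𝔼 b, ∫ y, ‖multiplierSum T A f (update s l (2 * boolSign b * s l)) (update ω l y)‖ ^ p
        ∂μ l := by
  have hf_with (i : τ) (hi : i ∈ ({i ∈ T | l ∈ A i} : Finset τ)) := hf i (mem_filter.1 hi).1
  have hf_without (i : τ) (hi : i ∈ ({i ∈ T | l ∉ A i} : Finset τ)) := hf i (mem_filter.1 hi).1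
  let u : B := multiplierSum {i ∈ T | l ∉ A i} A f s ω
  let v (y : X l) : B := multiplierSum {i ∈ T | l ∈ A i} A f s (update ω l y)
  have split (r : ℝ) (y : X l) :
      multiplierSum T A f (update s l (r * s l)) (update ω l y) = u + r • v y := by
    rw [multiplierSum_update_mul, multiplierSum_update_of_notMem hf_without
      fun i hi => (mem_filter.1 hi).2]
  have split_one (y : X l) : multiplierSum T A f s (update ω l y) = u + v y := by
    simpa using split 1 y
  have v_integrable : Integrable v (μ l) :=
    .of_bound ((stronglyMeasurable_multiplierSum (fun i hi => (hf_with i hi).stronglyMeasurable)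
      s).comp_measurable (measurable_update ω)).aestronglyMeasurable _
      (.of_forall fun y => norm_multiplierSum_le hκ s _)
  have v_mean : ∫ y, v y ∂μ l = 0 :=
    integral_multiplierSum_update_eq_zero hf_with hκ (fun i hi => (mem_filter.1 hi).2) s ω
  simp only [split, split_one]
  refine integral_comp_add_le_of_convexOn (Φ := fun x => ‖x‖ ^ p)
    (convexOn_univ_norm.pow (fun _ _ => norm_nonneg _) p) (by fun_prop) v_integrable v_mean
    fun r => ?_
  simp only [← split]
  exact integrable_norm_multiplierSum_pow (measurable_update ω)
    (fun i hi => (hf i hi).stronglyMeasurable) hκ _ p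

lemma integral_norm_multiplierSum_pow_le_expect [CompleteSpace B] [Fintype ι] [DecidableEq ι]
    [∀ l, IsProbabilityMeasure (μ l)] (hf : ∀ i ∈ T, IsCanonical μ (A i) (f i))
    (hκ : ∀ i ω, ‖f i ω‖ ≤ κ) (p : ℕ) (s : ι → ℝ) (l : ι) :
    ∫ ω, ‖multiplierSum T A f s ω‖ ^ p ∂Measure.pi μ ≤
      𝔼 b, ∫ ω, ‖multiplierSum T A f (update s l (2 * boolSign b * s l)) ω‖ ^ p ∂Measure.pi μ := by
  have hfm (i : τ) (hi : i ∈ T) := (hf i hi).stronglyMeasurable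
  have integrable_pi (s : ι → ℝ) :
      Integrable (fun ω => ‖multiplierSum T A f s ω‖ ^ p) (Measure.pi μ) :=
    integrable_norm_multiplierSum_pow measurable_id hfm hκ s p
  rw [← integral_expect fun b => integrable_pi _]
  refine integral_pi_le_of_integral_update_le (integrable_pi s)
    (integrable_expect fun b => integrable_pi _) l fun ω => ?_
  rw [integral_expect fun b => integrable_norm_multiplierSum_pow (measurable_update ω) hfm hκ _ p]
  exact integral_norm_multiplierSum_update_pow_le_expect hf hκ p s ω

theorem integral_norm_sum_pow_le_integral_expect [CompleteSpace B] [Fintype ι] [DecidableEq ι]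
    [∀ l, IsProbabilityMeasure (μ l)] (hf : ∀ i ∈ T, IsCanonical μ (A i) (f i))
    (hκ : ∀ i ω, ‖f i ω‖ ≤ κ) (p : ℕ) :
    ∫ ω, ‖∑ i ∈ T, f i ω‖ ^ p ∂Measure.pi μ ≤
      ∫ ω, 𝔼 e : ι → Bool, ‖multiplierSum T A f (fun l => 2 * boolSign (e l)) ω‖ ^ p
        ∂Measure.pi μ := by
  have integrable_pi (s : ι → ℝ) :
      Integrable (fun ω => ‖multiplierSum T A f s ω‖ ^ p) (Measure.pi μ) :=
    integrable_norm_multiplierSum_pow measurable_id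
      (fun i hi => (hf i hi).stronglyMeasurable) hκ s p
  rw [integral_expect fun e => integrable_pi _]
  simpa [multiplierSum] using le_expect_two_mul_boolSign
    (J := fun s => ∫ ω, ‖multiplierSum T A f s ω‖ ^ p ∂Measure.pi μ)
    (integral_norm_multiplierSum_pow_le_expect hf hκ p)

end Randomization

section Tails

variable {Ω : Type*} [MeasurableSpace Ω] {μ : Measure Ω} {Y : Ω → ℝ} {x : ℝ}

lemma measure_ge_le_of_integral_pow_le_exp_neg_mul [IsFiniteMeasure μ] (hx : 0 < x) {q : ℕ}
    (hY : Integrable (fun ω => Y ω ^ (2 * q)) μ)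
    (hYx : ∫ ω, Y ω ^ (2 * q) ∂μ ≤ Real.exp (-q) * x ^ (2 * q)) :
    μ {ω | x ≤ Y ω} ≤ ENNReal.ofReal (Real.exp (-q)) := by
  have markov := mul_meas_ge_le_integral_of_nonneg
    (.of_forall fun ω => (even_two_mul q).pow_nonneg (Y ω)) hY (x ^ (2 * q))
  have tail_le : μ.real {ω | x ^ (2 * q) ≤ Y ω ^ (2 * q)} ≤ Real.exp (-q) :=
    le_of_mul_le_mul_left (by linarith) (pow_pos hx (2 * q))
  calc μ {ω | x ≤ Y ω}
      ≤ μ {ω | x ^ (2 * q) ≤ Y ω ^ (2 * q)} :=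
        measure_mono fun ω hω => pow_le_pow_left₀ hx.le hω _
    _ = ENNReal.ofReal (μ.real {ω | x ^ (2 * q) ≤ Y ω ^ (2 * q)}) := (ofReal_measureReal).symm
    _ ≤ ENNReal.ofReal (Real.exp (-q)) := ENNReal.ofReal_le_ofReal tail_le

theorem measure_ge_le_of_integral_pow_le [IsProbabilityMeasure μ] {a L : ℝ} (ha : 0 < a)
    (hY : ∀ q : ℕ, Integrable (fun ω => Y ω ^ (2 * q)) μ)
    (hYL : ∀ q : ℕ, ∫ ω, Y ω ^ (2 * q) ∂μ ≤ (L * (q : ℝ) ^ a) ^ q) (hx : 0 ≤ x) :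
    μ {ω | x ≤ Y ω} ≤
      ENNReal.ofReal (Real.exp 1 * Real.exp (-(x / √(Real.exp 1 * L)) ^ (2 / a))) := by
  set y := x / √(Real.exp 1 * L) with hy
  have hy_nonneg : 0 ≤ y := by positivity
  set z := y ^ (2 / a)
  have hz_nonneg : 0 ≤ z := by positivity
  rw [← Real.exp_add]
  rcases lt_or_ge z 1 with hz | hz
  · exact prob_le_one.trans (ENNReal.one_le_ofReal.2 (Real.one_le_exp (by linarith)))
  have hy_pos : 0 < y := hy_nonneg.lt_of_ne' fun h => by
    simp [z, h, Real.zero_rpow (div_pos two_pos ha).ne'] at hz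
    linarith
  obtain ⟨hx_pos, hL_sqrt⟩ : 0 < x ∧ 0 < √(Real.exp 1 * L) := by
    refine ⟨hx.lt_of_ne' ?_, (Real.sqrt_nonneg _).lt_of_ne' ?_⟩ <;> rintro h <;>
      simp [hy, h] at hy_pos
  have hL : 0 < L := pos_of_mul_pos_right (Real.sqrt_pos.1 hL_sqrt) (Real.exp_pos 1).le
  have z_rpow : L * z ^ a = Real.exp (-1) * x ^ 2 := by
    rw [← Real.rpow_mul hy_nonneg, div_mul_cancel₀ _ ha.ne', Real.rpow_two, div_pow,
      Real.sq_sqrt (by positivity), Real.exp_neg]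
    field_simp
  -- At `q = ⌊z⌋₊` each factor `L * q ^ a` is at most `x ^ 2 / e`, which gains `exp (-q)`.
  have moment_le : ∫ ω, Y ω ^ (2 * ⌊z⌋₊) ∂μ ≤ Real.exp (-⌊z⌋₊) * x ^ (2 * ⌊z⌋₊) :=
    calc ∫ ω, Y ω ^ (2 * ⌊z⌋₊) ∂μ
        ≤ (L * (⌊z⌋₊ : ℝ) ^ a) ^ ⌊z⌋₊ := hYL _
      _ ≤ (L * z ^ a) ^ ⌊z⌋₊ := by
          gcongr
          exact Nat.floor_le hz_nonneg
      _ = Real.exp (-⌊z⌋₊) * x ^ (2 * ⌊z⌋₊) := by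
          rw [z_rpow, mul_pow, ← Real.exp_nat_mul, mul_neg_one, pow_mul]
  refine (measure_ge_le_of_integral_pow_le_exp_neg_mul hx_pos (hY _) moment_le).trans ?_
  gcongr
  linarith [Nat.lt_floor_add_one z]

end Tails

section UStatistics

variable {B S : Type*} [NormedAddCommGroup B] [NormedSpace ℝ B] {C κ : ℝ} {k n : ℕ}

/-- The constant in the moment bound for canonical `U`-statistics of order `k` with values in a
space of type 2 with constant `C`: decoupling costs `k ^ k`, randomization `2 ^ k`, and each of
the `k` coordinates contributes one Khintchine constant. -/
def ustatMomentConst (k : ℕ) (C : ℝ) : ℝ := ((k : ℝ) ^ k * 2 ^ k) ^ 2 * (2 * khintchineConst C) ^ k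

/-- The scale `λ₀` in the tail bound for canonical `U`-statistics of order `k` with values in a
space of type 2 with constant `C`. -/
def ustatTailScale (k : ℕ) (C : ℝ) : ℝ := √(Real.exp 1 * ustatMomentConst k C)

lemma ustatTailScale_pos (hk : k ≠ 0) : 0 < ustatTailScale k C := by
  have hK : 0 < khintchineConst C := Real.exp_pos _
  unfold ustatTailScale ustatMomentConst
  positivity

lemma multiplierSum_injTuples_two_mul {X : Fin n → Type*}
    (g : (Fin k → Fin n) → (∀ l, X l) → B) (s : Fin n → ℝ) (ω : ∀ l, X l) :
    multiplierSum (injTuples k n) (fun i => univ.image i) g (fun l => 2 * s l) ω =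
      (2 : ℝ) ^ k • ∑ i ∈ injTuples k n, (∏ j, s (i j)) • g i ω := by
  rw [multiplierSum, Finset.smul_sum]
  refine Finset.sum_congr rfl fun i hi => ?_
  rw [Finset.prod_image (mem_filter.1 hi).2.injOn, Finset.prod_mul_distrib, mul_smul]
  simp

variable [MeasurableSpace S]

lemma isCanonical_comp {ι J : Type*} [DecidableEq ι] [Fintype J] [DecidableEq J]
    {P : ι → Measure S} {i : J → ι} (hi : Injective i) {h : (J → S) → B}
    (hh : StronglyMeasurable h)
    (hcan : ∀ j x, ∫ y, h (update x j y) ∂P (i j) = 0) :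
    IsCanonical P (univ.image i) fun ω => h (ω ∘ i) where
  stronglyMeasurable := hh.comp_measurable (by fun_prop)
  dependsOn ω ω' hω := congrArg h (funext fun j => hω (i j) (by simp))
  integral_update_eq_zero l hl ω := by
    obtain ⟨j, -, rfl⟩ := mem_image.1 hl
    simp only [update_comp_eq_of_injective ω hi, hcan]

theorem integral_norm_ustat_pow_le [CompleteSpace B] [NeZero k] [NeZero n]
    (hB : IsType2 B C) {P : Fin n → Measure S} [∀ l, IsProbabilityMeasure (P l)]
    {H : (Fin k → Fin n) → (Fin k → S) → B} (hH : ∀ i, StronglyMeasurable (H i))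
    (hcan : ∀ i j x, ∫ y, H i (update x j y) ∂P (i j) = 0) (hκ : ∀ i x, ‖H i x‖ ≤ κ) (q : ℕ) :
    ∫ ω, ‖∑ i ∈ injTuples k n, H i (ω ∘ i)‖ ^ (2 * q) ∂Measure.pi P ≤
      (ustatMomentConst k C * n ^ k * κ ^ 2 * q ^ k) ^ q := by
  have chaos_le (ω : Fin n → S) :
      𝔼 e : Fin n → Bool, ‖multiplierSum (injTuples k n) (fun i => univ.image i)
          (fun i ω => H i (ω ∘ i)) (fun l => 2 * boolSign (e l)) ω‖ ^ (2 * q) ≤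
        (ustatMomentConst k C * n ^ k * κ ^ 2 * q ^ k) ^ q := by
    have chaos := hB.expect_norm_chaos_pow_le q fun i => hκ i (ω ∘ i)
    simp only [multiplierSum_injTuples_two_mul, norm_smul, mul_pow _ _ (2 * q),
      ← Finset.mul_expect, Real.norm_of_nonneg (pow_nonneg zero_le_two k)]
    refine (mul_le_mul_of_nonneg_left chaos (by positivity)).trans_eq ?_
    rw [pow_mul, ← mul_pow, ustatMomentConst]
    ring
  have canonical (i : Fin k → Fin n) (hi : i ∈ injTuples k n) :
      IsCanonical P (univ.image i) fun ω => H i (ω ∘ i) :=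
    isCanonical_comp (mem_filter.1 hi).2 (hH i) (hcan i)
  refine (integral_norm_sum_pow_le_integral_expect canonical (fun i ω => hκ i _) (2 * q)).trans ?_
  refine (integral_mono_of_nonneg
    (.of_forall fun ω => Finset.expect_nonneg fun e _ => by positivity)
    (integrable_const _) (.of_forall chaos_le)).trans_eq ?_
  simp

lemma sqrt_mul_ustatMomentConst (hκ : 0 ≤ κ) :
    √(Real.exp 1 * (ustatMomentConst k C * n ^ k * κ ^ 2)) =
      ustatTailScale k C * (n : ℝ) ^ ((k : ℝ) / 2) * κ := by
  have sqrt_pow : √((n : ℝ) ^ k) = (n : ℝ) ^ ((k : ℝ) / 2) := by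
    rw [Real.sqrt_eq_rpow, ← Real.rpow_natCast, ← Real.rpow_mul n.cast_nonneg, mul_one_div]
  rw [← mul_assoc, ← mul_assoc, Real.sqrt_mul' _ (sq_nonneg κ), Real.sqrt_sq hκ,
    Real.sqrt_mul' _ (by positivity), sqrt_pow, ustatTailScale]

theorem stmt1_general [CompleteSpace B] (hk : 1 ≤ k) (hB : IsType2 B C) (hn : 0 < n)
    (P : Fin n → Measure S) [∀ l, IsProbabilityMeasure (P l)]
    (H : (Fin k → Fin n) → (Fin k → S) → B) (hH : ∀ i, StronglyMeasurable (H i))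
    (hcan : ∀ i j x, ∫ y, H i (update x j y) ∂P (i j) = 0) (hκ : ∀ i x, ‖H i x‖ ≤ κ)
    {x : ℝ} (hx : 0 ≤ x) :
    Measure.pi P {ω : Fin n → S | x ≤ ‖∑ i ∈ injTuples k n, H i (ω ∘ i)‖} ≤
      ENNReal.ofReal (Real.exp 1 * Real.exp
        (-(x / (ustatTailScale k C * (n : ℝ) ^ ((k : ℝ) / 2) * κ)) ^ (2 / (k : ℝ)))) := by
  have : NeZero n := ⟨hn.ne'⟩
  have : NeZero k := ⟨Nat.one_le_iff_ne_zero.1 hk⟩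
  obtain ⟨ω₀⟩ : Nonempty (Fin n → S) := nonempty_of_isProbabilityMeasure (Measure.pi P)
  have hκ_nonneg : 0 ≤ κ := (norm_nonneg _).trans (hκ (fun _ => 0) fun _ => ω₀ 0)
  rw [← sqrt_mul_ustatMomentConst hκ_nonneg]
  refine measure_ge_le_of_integral_pow_le (by positivity) (fun q => ?_) (fun q => ?_) hx
  · simpa [multiplierSum] using integrable_norm_multiplierSum_pow (ν := Measure.pi P)
      (T := injTuples k n) (A := fun _ => ∅) (f := fun i ω => H i (ω ∘ i)) measurable_id
      (fun i _ => (hH i).comp_measurable (by fun_prop)) (fun i ω => hκ i _) (fun _ => 1) (2 * q)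
  · simpa only [Real.rpow_natCast] using integral_norm_ustat_pow_le hB hH hcan hκ q

end UStatistics

/-- (Theorem 9.) Let `B` be a separable Banach space of type 2 with constant `C`
and let `H : S^k → B` be bounded, symmetric and `P`-canonical with `‖H‖ ≤ κ`. Then there are
constants `λ₀, D` depending only on `k` and `C` such that for all `n ≥ k` and `x ≥ 0`,
`Pr{ ‖Σ_{i ∈ I_n^k} H(X_{i_1},…,X_{i_k})‖ ≥ x } ≤ D exp(−(x/(λ₀ n^{k/2} κ))^{2/k})`. -/
theorem stmt1 (k : ℕ) (hk : 1 ≤ k) (C : ℝ) (hC : 0 < C) :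
    ∃ lam0 D : ℝ, 0 < lam0 ∧ 0 < D ∧
      ∀ (B : Type) [NormedAddCommGroup B] [NormedSpace ℝ B] [CompleteSpace B]
        [SecondCountableTopology B],
      -- `B` has type 2 with constant `C`:
      (∀ (N : ℕ) (x : Fin N → B),
        ((2 : ℝ) ^ N)⁻¹ *
            ∑ ε : Fin N → Bool, ‖∑ i, (if ε i then x i else -x i)‖ ^ 2 ≤
          C * ∑ i, ‖x i‖ ^ 2) →
      ∀ (S : Type) (_ : MeasurableSpace S) (P : Measure S), IsProbabilityMeasure P →
      ∀ H : (Fin k → S) → B, StronglyMeasurable H →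
        -- symmetric in its entries:
        (∀ (τ : Equiv.Perm (Fin k)) (x : Fin k → S), H (x ∘ τ) = H x) →
        -- `P`-canonical (completely degenerate):
        (∀ (j : Fin k) (x : Fin k → S), (∫ y, H (Function.update x j y) ∂P) = 0) →
      ∀ κ : ℝ, (∀ x, ‖H x‖ ≤ κ) →
      ∀ n : ℕ, k ≤ n → ∀ x : ℝ, 0 ≤ x →
        (Measure.pi fun _ : Fin n => P)
          {ω : Fin n → S | x ≤ ‖∑ i ∈ injTuples k n, H (ω ∘ i)‖} ≤
        ENNReal.ofReal (D * Real.exp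
          (-(x / (lam0 * (n : ℝ) ^ ((k : ℝ) / 2) * κ)) ^ (2 / (k : ℝ)))) := by
  exact ⟨ustatTailScale k C, Real.exp 1, ustatTailScale_pos (by omega), Real.exp_pos 1,
    fun B _ _ _ _ hB S _ P _ H hH _ hcan κ hκ n hn x hx =>
      stmt1_general hk hB (by omega) (fun _ => P) (fun _ => H) (fun _ => hH) (fun _ => hcan)
        (fun _ => hκ) hx⟩
end
end

section
/- Let B be a separable Banach space, (S, 𝒮) a measurable space, P a probability measure on S, and let H : S^k → B be a bounded, strongly measurable function, symmetric in its entries and P-canonical (i.e. ∫_S H(x_1, …, x_{k−1}, y) dP(y) = 0 for all x_1, …, x_{k−1} ∈ S). Let X_i^{(j)}, 1 ≤ i ≤ n, 1 ≤ j ≤ k, be i.i.d. S-valued random variables with law P. Let κ and χ_n be any numbers with κ ≥ sup_{x_1,…,x_k ∈ S} ‖H(x_1, …, x_k)‖ and χ_n ≥ (E‖ Σ_{(i_1,…,i_k) ∈ I_n^k} H(X_{i_1}^{(1)}, …, X_{i_k}^{(k)}) ‖²)^{1/2}. Then there exists a constant C depending only on k such that for all n ∈ ℕ and all r ≥ 2,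 E ‖ Σ_{(i_1,…,i_k) ∈ I_n^k} H(X_{i_1}^{(1)}, …, X_{i_k}^{(k)}) ‖^r ≤ C^r [ r^{kr/2} χ_n^r + r^{(k+1)r/2} n^{(k−1)r} κ^r + r^{kr} κ^r ]. -/
open MeasureTheory Finset
open scoped ENNReal
noncomputable section

/-
The coordinates of the array are given the weight `t = √(2r)` one at a time. For a centred `Y` with
`r ‖Y‖ ≤ K` one has `‖ ‖b + Y‖ + K ‖_{L^r} ≤ ‖ ‖b + tY‖ + K ‖_{L²}`: dividing by `‖b‖ + K` reduces
this to the scalar inequality `(1 + x)^r ≤ 1 + rx + r²x²` for `r|x| ≤ 1` and to Bernoulli's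
inequality, the increment of the norm having nonnegative mean by Jensen. Such an inequality
tensorises by Minkowski's integral inequality. After all coordinates have been treated, each
canonical summand carries the factor `t^k`; and `K = r n^{k-1} t^{k-1} κ` is admissible because at
most `n^{k-1}` multi-indices pass through a given coordinate.
-/

section Minkowski

variable {α β : Type*} [MeasurableSpace α] [MeasurableSpace β] {μ : Measure α} {ν : Measure β}

theorem lintegral_le_of_le_lintegral_rpow [SFinite μ] [SFinite ν] {q : ℝ} (hq : 1 ≤ q)
    {g : α → β → ℝ≥0∞} (hg : Measurable (Function.uncurry g)) {φ : α → ℝ≥0∞}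
    (hφ : Measurable φ) (hφ_fin : ∫⁻ a, φ a ∂μ ≠ ∞)
    (hle : ∀ a, φ a ≤ (∫⁻ b, g a b ∂ν) ^ q) :
    ∫⁻ a, φ a ∂μ ≤ (∫⁻ b, (∫⁻ a, g a b ^ q ∂μ) ^ q⁻¹ ∂ν) ^ q := by
  have hq0 : 0 < q := by linarith
  have hq1 : 0 ≤ 1 - q⁻¹ := sub_nonneg.2 (inv_le_one_of_one_le₀ hq)
  have hga (a : α) : Measurable (g a) := hg.of_uncurry_left
  have hgb (b : β) : Measurable fun a ↦ g a b := hg.of_uncurry_right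
  set I := ∫⁻ a, φ a ∂μ
  set R := ∫⁻ b, (∫⁻ a, g a b ^ q ∂μ) ^ q⁻¹ ∂ν
  rcases eq_or_ne I 0 with hI | hI
  · simp [hI]
  have hsplit (c : ℝ≥0∞) : c ^ (1 - q⁻¹) * c ^ q⁻¹ = c := by
    rw [← ENNReal.rpow_add_of_nonneg _ _ hq1 (by positivity), sub_add_cancel, ENNReal.rpow_one]
  have holder : I ≤ I ^ (1 - q⁻¹) * R := calc
    I ≤ ∫⁻ a, ∫⁻ b, φ a ^ (1 - q⁻¹) * g a b ∂ν ∂μ := by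
      refine lintegral_mono fun a ↦ ?_
      rw [lintegral_const_mul _ (hga a)]
      conv_lhs => rw [← hsplit (φ a)]
      gcongr
      exact (ENNReal.rpow_inv_le_iff hq0).2 (hle a)
    _ = ∫⁻ b, ∫⁻ a, φ a ^ (1 - q⁻¹) * (g a b ^ q) ^ q⁻¹ ∂μ ∂ν := by
      simp only [ENNReal.rpow_rpow_inv hq0.ne']
      exact lintegral_lintegral_swap
        (((hφ.comp measurable_fst).pow_const _).mul hg).aemeasurable
    _ ≤ ∫⁻ b, I ^ (1 - q⁻¹) * (∫⁻ a, g a b ^ q ∂μ) ^ q⁻¹ ∂ν :=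
      lintegral_mono fun b ↦ ENNReal.lintegral_mul_norm_pow_le hφ.aemeasurable
        ((hgb b).pow_const q).aemeasurable hq1 (by positivity) (by ring)
    _ = I ^ (1 - q⁻¹) * R :=
      lintegral_const_mul _ ((hg.pow_const q).lintegral_prod_left'.pow_const _)
  have hpow_zero : I ^ (1 - q⁻¹) ≠ 0 := by simp [hI, hφ_fin]
  have hpow_top : I ^ (1 - q⁻¹) ≠ ∞ := ENNReal.rpow_ne_top_of_nonneg hq1 hφ_fin
  exact (ENNReal.rpow_inv_le_iff hq0).1 <|
    (ENNReal.mul_le_mul_iff_right hpow_zero hpow_top).1 ((hsplit I).le.trans holder)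

/- The integral on the left may be infinite even when `μ` is finite, so the bound is proved for the
simple functions of finite integral below the integrand. -/
theorem lintegral_rpow_lintegral_le [SigmaFinite μ] [SFinite ν] {q : ℝ} (hq : 1 ≤ q)
    {g : α → β → ℝ≥0∞} (hg : Measurable (Function.uncurry g)) :
    ∫⁻ a, (∫⁻ b, g a b ∂ν) ^ q ∂μ ≤ (∫⁻ b, (∫⁻ a, g a b ^ q ∂μ) ^ q⁻¹ ∂ν) ^ q := by
  rw [lintegral_eq_nnreal]
  refine iSup₂_le fun ψ hψ ↦ le_of_forall_lt fun L hL ↦ ?_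
  rw [← SimpleFunc.lintegral_eq_lintegral] at hL
  obtain ⟨φ, hφψ, hφ_fin, hLφ⟩ :=
    SimpleFunc.exists_lt_lintegral_simpleFunc_of_lt_lintegral (f := ψ) hL
  refine hLφ.trans_le (lintegral_le_of_le_lintegral_rpow hq hg
    φ.measurable.coe_nnreal_ennreal hφ_fin.ne fun a ↦ le_trans ?_ (hψ a))
  exact_mod_cast hφψ a

end Minkowski

section Tensorization

variable {ι : Type*} [DecidableEq ι] {X : ι → Type*} [∀ i, MeasurableSpace (X i)]
  {μ : ∀ i, Measure (X i)} [∀ i, SigmaFinite (μ i)] {q : ℝ}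

theorem lintegral_lmarginal_update_rpow_le (hq : 1 ≤ q) {f : (∀ i, X i) → ℝ≥0∞}
    (hf : Measurable f) {A : Finset ι} {v : ι} (hv : v ∉ A) (x : ∀ i, X i) :
    ∫⁻ y, (lmarginal μ A f (Function.update x v y)) ^ q ∂μ v ≤
      (lmarginal μ A (fun x ↦ (∫⁻ y, f (Function.update x v y) ^ q ∂μ v) ^ q⁻¹) x) ^ q := by
  simp_rw [lmarginal_update_of_notMem hf hv, lmarginal, Function.comp_apply]
  refine lintegral_rpow_lintegral_le hq (hf.comp ?_)
  exact measurable_update'.comp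
    ((measurable_updateFinset.comp measurable_snd).prodMk measurable_fst)

variable {f : Finset ι → (∀ i, X i) → ℝ≥0∞}

theorem lintegral_lmarginal_update_rpow_le_lmarginal_insert (hq : 1 ≤ q)
    (hf : ∀ A, Measurable (f A)) {A : Finset ι} {v : ι} (hv : v ∉ A)
    (hstep : ∀ x, ∫⁻ y, f A (Function.update x v y) ^ q ∂μ v ≤
      (∫⁻ y, f (insert v A) (Function.update x v y) ∂μ v) ^ q) (x : ∀ i, X i) :
    ∫⁻ y, (lmarginal μ A (f A) (Function.update x v y)) ^ q ∂μ v ≤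
      (lmarginal μ (insert v A) (f (insert v A)) x) ^ q := by
  have hq0 : 0 < q := by linarith
  refine (lintegral_lmarginal_update_rpow_le hq (hf A) hv x).trans ?_
  rw [lmarginal_insert' _ (hf _) hv]
  gcongr
  exact lmarginal_mono (fun z ↦ (ENNReal.rpow_inv_le_iff hq0).2 (hstep z)) x

theorem lmarginal_rpow_lmarginal_compl_le [Fintype ι] (hq : 1 ≤ q) (hf : ∀ A, Measurable (f A))
    (hstep : ∀ A v, v ∉ A → ∀ x, ∫⁻ y, f A (Function.update x v y) ^ q ∂μ v ≤
      (∫⁻ y, f (insert v A) (Function.update x v y) ∂μ v) ^ q) (s : Finset ι) (x : ∀ i, X i) :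
    lmarginal μ s (fun x ↦ (lmarginal μ sᶜ (f sᶜ) x) ^ q) x ≤
      (lmarginal μ univ (f univ) x) ^ q := by
  induction s using Finset.induction_on with
  | empty => simp
  | insert v s hv ih =>
    have hv' : v ∉ (insert v s)ᶜ := by simp
    have hcompl : insert v (insert v s)ᶜ = sᶜ := by
      rw [compl_insert, insert_erase (mem_compl.2 hv)]
    rw [lmarginal_insert' _ (((hf _).lmarginal μ).pow_const q) hv]
    refine (lmarginal_mono (fun z ↦ ?_) x).trans ih
    simpa only [hcompl] using
      lintegral_lmarginal_update_rpow_le_lmarginal_insert hq hf hv' (hstep _ v hv') z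

theorem lintegral_pi_rpow_le [Fintype ι] (hq : 1 ≤ q) (hf : ∀ A, Measurable (f A))
    (hstep : ∀ A v, v ∉ A → ∀ x, ∫⁻ y, f A (Function.update x v y) ^ q ∂μ v ≤
      (∫⁻ y, f (insert v A) (Function.update x v y) ∂μ v) ^ q) :
    ∫⁻ x, f ∅ x ^ q ∂Measure.pi μ ≤ (∫⁻ x, f univ x ∂Measure.pi μ) ^ q := by
  rcases isEmpty_or_nonempty (∀ i, X i) with _ | ⟨⟨x⟩⟩
  · simp
  · simpa only [compl_univ, lmarginal_empty, lmarginal_univ] using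
      lmarginal_rpow_lmarginal_compl_le hq hf hstep univ x

theorem eLpNorm_pi_le_of_forall_update [Fintype ι] {E : Type*} [NormedAddCommGroup E]
    {p r : ℝ≥0∞} (hp : p ≠ 0) (hpr : p ≤ r) (hr : r ≠ ∞) {f : Finset ι → (∀ i, X i) → E}
    (hf : ∀ A, StronglyMeasurable (f A))
    (hstep : ∀ A v, v ∉ A → ∀ x, eLpNorm (fun y ↦ f A (Function.update x v y)) r (μ v) ≤
      eLpNorm (fun y ↦ f (insert v A) (Function.update x v y)) p (μ v)) :
    eLpNorm (f ∅) r (Measure.pi μ) ≤ eLpNorm (f univ) p (Measure.pi μ) := by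
  have hr0 : r ≠ 0 := (hp.bot_lt.trans_le hpr).ne'
  have hp_top : p ≠ ∞ := (hpr.trans_lt hr.lt_top).ne
  have hp' : 0 < p.toReal := ENNReal.toReal_pos hp hp_top
  have hr' : 0 < r.toReal := ENNReal.toReal_pos hr0 hr
  have hq : 1 ≤ r.toReal / p.toReal := (one_le_div hp').2 (ENNReal.toReal_mono hr hpr)
  have hpow (c : ℝ≥0∞) : (c ^ p.toReal) ^ (r.toReal / p.toReal) = c ^ r.toReal := by
    rw [← ENNReal.rpow_mul, mul_div_cancel₀ _ hp'.ne']
  have hiff {a b : ℝ≥0∞} : a ^ (1 / r.toReal) ≤ b ^ (1 / p.toReal) ↔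
      a ≤ b ^ (r.toReal / p.toReal) := by
    rw [one_div, ENNReal.rpow_inv_le_iff hr', ← ENNReal.rpow_mul, one_div_mul_eq_div]
  simp only [eLpNorm_eq_lintegral_rpow_enorm_toReal hp hp_top,
    eLpNorm_eq_lintegral_rpow_enorm_toReal hr0 hr, hiff, ← hpow] at hstep ⊢
  exact lintegral_pi_rpow_le (f := fun A x ↦ ‖f A x‖ₑ ^ p.toReal) hq
    (fun A ↦ (hf A).enorm.pow_const _) hstep

end Tensorization

section OnePoint

variable {S : Type*} [MeasurableSpace S] {P : Measure S} [IsProbabilityMeasure P] {r : ℝ}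

theorem one_add_rpow_le {r x : ℝ} (hr : 2 ≤ r) (hx : r * |x| ≤ 1) :
    (1 + x) ^ r ≤ 1 + r * x + r ^ 2 * x ^ 2 := by
  have hr0 : 0 < r := by linarith
  have hrx : |r * x| ≤ 1 := by rwa [abs_mul, abs_of_pos hr0]
  have hx0 : 0 ≤ 1 + x := by nlinarith [neg_abs_le x, abs_nonneg x]
  calc (1 + x) ^ r ≤ Real.exp x ^ r := by
        gcongr
        linarith [Real.add_one_le_exp x]
    _ = Real.exp (r * x) := by rw [← Real.exp_mul, mul_comm]
    _ ≤ 1 + r * x + r ^ 2 * x ^ 2 := by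
        linarith [le_of_abs_le (Real.abs_exp_sub_one_sub_id_le hrx), mul_pow r x 2]

theorem memLp_of_mul_abs_le_one {D : S → ℝ} (hr : 0 < r) (hD : AEStronglyMeasurable D P)
    (hD_le : ∀ y, r * |D y| ≤ 1) (p : ℝ≥0∞) : MemLp D p P :=
  MemLp.of_bound hD r⁻¹ <| .of_forall fun y ↦ by
    rw [Real.norm_eq_abs, ← one_div, le_div_iff₀' hr]
    exact hD_le y

theorem integrable_one_add_mul_add_mul_sq {D : S → ℝ} (hD : MemLp D 2 P) (c d : ℝ) :
    Integrable (fun y ↦ 1 + c * D y + d * D y ^ 2) P :=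
  ((integrable_const 1).add ((hD.integrable one_le_two).const_mul c)).add
    (hD.integrable_sq.const_mul d)

theorem integral_one_add_mul_add_mul_sq {D : S → ℝ} (hD : MemLp D 2 P) (c d : ℝ) :
    ∫ y, (1 + c * D y + d * D y ^ 2) ∂P = 1 + c * ∫ y, D y ∂P + d * ∫ y, D y ^ 2 ∂P := by
  have hi : Integrable (fun y ↦ c * D y) P := (hD.integrable one_le_two).const_mul c
  rw [integral_add (by exact (integrable_const 1).add hi) (hD.integrable_sq.const_mul d),
    integral_add (integrable_const 1) hi, integral_const_mul, integral_const_mul]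
  simp

theorem integral_one_add_rpow_le {D : S → ℝ} (hr : 2 ≤ r) (hD : AEStronglyMeasurable D P)
    (hD_le : ∀ y, r * |D y| ≤ 1) (hD_int : 0 ≤ ∫ y, D y ∂P) :
    ∫ y, (1 + D y) ^ r ∂P ≤ (∫ y, (1 + √(2 * r) * D y) ^ 2 ∂P) ^ (r / 2) := by
  have hr0 : 0 < r := by linarith
  have ht : √(2 * r) ^ 2 = 2 * r := Real.sq_sqrt (by linarith)
  have ht1 : 1 ≤ √(2 * r) := Real.one_le_sqrt.2 (by linarith)
  have hD2 : MemLp D 2 P := memLp_of_mul_abs_le_one hr0 hD hD_le 2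
  have hV : 0 ≤ ∫ y, D y ^ 2 ∂P := integral_nonneg fun y ↦ sq_nonneg _
  have hsq : ∫ y, (1 + √(2 * r) * D y) ^ 2 ∂P =
      1 + 2 * √(2 * r) * ∫ y, D y ∂P + 2 * r * ∫ y, D y ^ 2 ∂P := by
    rw [← integral_one_add_mul_add_mul_sq hD2]
    congr 1 with y
    linear_combination D y ^ 2 * ht
  calc ∫ y, (1 + D y) ^ r ∂P ≤ ∫ y, (1 + r * D y + r ^ 2 * D y ^ 2) ∂P := by
        refine integral_mono_of_nonneg (.of_forall fun y ↦ ?_)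
          (integrable_one_add_mul_add_mul_sq hD2 _ _)
          (.of_forall fun y ↦ one_add_rpow_le hr (hD_le y))
        exact Real.rpow_nonneg (by nlinarith [hD_le y, neg_abs_le (D y), abs_nonneg (D y)]) r
    _ = 1 + r * ∫ y, D y ∂P + r ^ 2 * ∫ y, D y ^ 2 ∂P :=
        integral_one_add_mul_add_mul_sq hD2 _ _
    _ ≤ 1 + r / 2 * (2 * √(2 * r) * ∫ y, D y ∂P + 2 * r * ∫ y, D y ^ 2 ∂P) := by
        nlinarith [mul_nonneg hr0.le hD_int]
    _ ≤ (∫ y, (1 + √(2 * r) * D y) ^ 2 ∂P) ^ (r / 2) := by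
        rw [hsq, add_assoc]
        refine one_add_mul_self_le_rpow_one_add ?_ (by linarith)
        linarith [mul_nonneg (by positivity : 0 ≤ 2 * √(2 * r)) hD_int,
          mul_nonneg (by positivity : 0 ≤ 2 * r) hV]

theorem sqrt_two_mul_le {r : ℝ} (hr : 2 ≤ r) : √(2 * r) ≤ r :=
  Real.sqrt_le_iff.2 ⟨by linarith, by nlinarith⟩

theorem eLpNorm_one_add_le {D : S → ℝ} (hr : 2 ≤ r) (hD : AEStronglyMeasurable D P)
    (hD_le : ∀ y, r * |D y| ≤ 1) (hD_int : 0 ≤ ∫ y, D y ∂P) :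
    eLpNorm (fun y ↦ 1 + D y) (.ofReal r) P ≤
      eLpNorm (fun y ↦ 1 + √(2 * r) * D y) 2 P := by
  have hr0 : 0 < r := by linarith
  have hD_nonneg (y : S) : 0 ≤ 1 + D y := by
    nlinarith [hD_le y, neg_abs_le (D y), abs_nonneg (D y)]
  have hmem (c : ℝ) (p : ℝ≥0∞) : MemLp (fun y ↦ 1 + c * D y) p P :=
    (memLp_const (1 : ℝ)).add ((memLp_of_mul_abs_le_one hr0 hD hD_le p).const_mul c)
  have hmem_one : MemLp (fun y ↦ 1 + D y) (.ofReal r) P := by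
    simpa only [one_mul] using hmem 1 (.ofReal r)
  rw [hmem_one.eLpNorm_eq_integral_rpow_norm (by simpa using hr0) ENNReal.ofReal_ne_top,
    (hmem _ 2).eLpNorm_eq_integral_rpow_norm two_ne_zero ENNReal.ofNat_ne_top]
  refine ENNReal.ofReal_le_ofReal ?_
  simp only [ENNReal.toReal_ofReal hr0.le, ENNReal.toReal_ofNat, Real.rpow_two, Real.norm_eq_abs,
    sq_abs, abs_of_nonneg (hD_nonneg _)]
  rw [Real.rpow_inv_le_iff_of_pos (integral_nonneg fun y ↦ Real.rpow_nonneg (hD_nonneg y) r)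
    (Real.rpow_nonneg (integral_nonneg fun y ↦ sq_nonneg _) _) hr0,
    ← Real.rpow_mul (integral_nonneg fun y ↦ sq_nonneg _), inv_mul_eq_div]
  exact integral_one_add_rpow_le hr hD hD_le hD_int

theorem eLpNorm_const_add_le {Z : S → ℝ} {a : ℝ} (hr : 2 ≤ r) (hZ : AEStronglyMeasurable Z P)
    (hZ_le : ∀ y, r * |Z y| ≤ a) (hZ_int : 0 ≤ ∫ y, Z y ∂P) :
    eLpNorm (fun y ↦ a + Z y) (.ofReal r) P ≤
      eLpNorm (fun y ↦ a + √(2 * r) * Z y) 2 P := by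
  obtain ⟨y₀⟩ := P.nonempty_of_neZero
  have ha : 0 ≤ a := (mul_nonneg (by linarith) (abs_nonneg _)).trans (hZ_le y₀)
  have hcancel (y : S) : a * (Z y / a) = Z y :=
    mul_div_cancel_of_imp' fun h ↦ abs_nonpos_iff.1 <| by nlinarith [hZ_le y, abs_nonneg (Z y)]
  have hscale (c : ℝ) : (fun y ↦ a + c * Z y) = a • fun y ↦ 1 + c * (Z y / a) := by
    ext y
    rw [Pi.smul_apply, smul_eq_mul, mul_add, mul_left_comm, hcancel, mul_one]
  have hscale_one : (fun y ↦ a + Z y) = a • fun y ↦ 1 + Z y / a := by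
    simpa only [one_mul] using hscale 1
  rw [hscale, hscale_one, eLpNorm_const_smul, eLpNorm_const_smul]
  gcongr
  refine eLpNorm_one_add_le hr (by simpa only [div_eq_mul_inv] using hZ.mul_const a⁻¹)
    (fun y ↦ ?_) ?_
  · rw [abs_div, abs_of_nonneg ha, ← mul_div_assoc]
    exact div_le_one_of_le₀ (hZ_le y) ha
  · rw [integral_div]
    exact div_nonneg hZ_int ha

variable {B : Type*} [NormedAddCommGroup B] [NormedSpace ℝ B]

theorem norm_add_mul_sub_le_norm_add_smul {t : ℝ} (ht : 1 ≤ t) (b y : B) :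
    ‖b‖ + t * (‖b + y‖ - ‖b‖) ≤ ‖b + t • y‖ := by
  have hconv : ‖t • (b + y)‖ ≤ ‖(t - 1) • b‖ + ‖b + t • y‖ := by
    rw [show t • (b + y) = (t - 1) • b + (b + t • y) by module]
    exact norm_add_le _ _
  rw [norm_smul, norm_smul, Real.norm_of_nonneg (by linarith),
    Real.norm_of_nonneg (by linarith)] at hconv
  linarith

theorem norm_le_integral_norm_add [CompleteSpace B] {Y : S → B} (hY : Integrable Y P)
    (hY_int : ∫ y, Y y ∂P = 0) (b : B) : ‖b‖ ≤ ∫ y, ‖b + Y y‖ ∂P := by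
  simpa [integral_add (integrable_const b) hY, hY_int] using
    norm_integral_le_integral_norm (μ := P) fun y ↦ b + Y y

theorem eLpNorm_norm_add_le [CompleteSpace B] {Y : S → B} {K : ℝ} (hr : 2 ≤ r)
    (hY : Integrable Y P) (hY_int : ∫ y, Y y ∂P = 0) (hYK : ∀ y, r * ‖Y y‖ ≤ K) (b : B) :
    eLpNorm (fun y ↦ ‖b + Y y‖ + K) (.ofReal r) P ≤
      eLpNorm (fun y ↦ ‖b + √(2 * r) • Y y‖ + K) 2 P := by
  set Z : S → ℝ := fun y ↦ ‖b + Y y‖ - ‖b‖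
  have hbY : Integrable (fun y ↦ ‖b + Y y‖) P := ((integrable_const b).add hY).norm
  have hZ_le (y : S) : r * |Z y| ≤ ‖b‖ + K := by
    have hdiff : |Z y| ≤ ‖Y y‖ := by simpa [Z] using abs_norm_sub_norm_le (b + Y y) b
    nlinarith [hYK y, norm_nonneg b]
  have hZ_int : 0 ≤ ∫ y, Z y ∂P := by
    rw [integral_sub hbY (integrable_const _)]
    simpa using norm_le_integral_norm_add hY hY_int b
  calc eLpNorm (fun y ↦ ‖b + Y y‖ + K) (.ofReal r) P
      = eLpNorm (fun y ↦ (‖b‖ + K) + Z y) (.ofReal r) P := by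
        congr 1 with y
        ring
    _ ≤ eLpNorm (fun y ↦ (‖b‖ + K) + √(2 * r) * Z y) 2 P :=
        eLpNorm_const_add_le hr (hbY.sub (integrable_const _)).aestronglyMeasurable hZ_le hZ_int
    _ ≤ eLpNorm (fun y ↦ ‖b + √(2 * r) • Y y‖ + K) 2 P := by
        refine eLpNorm_mono_real fun y ↦ abs_le.2 ⟨?_, ?_⟩
        · have htZ : √(2 * r) * |Z y| ≤ ‖b‖ + K :=
            (mul_le_mul_of_nonneg_right (sqrt_two_mul_le hr) (abs_nonneg _)).trans (hZ_le y)
          have hYK_nonneg : 0 ≤ K := (by positivity : 0 ≤ r * ‖Y y‖).trans (hYK y)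
          nlinarith [neg_abs_le (Z y), Real.sqrt_nonneg (2 * r), norm_nonneg (b + √(2 * r) • Y y)]
        · linarith [norm_add_mul_sub_le_norm_add_smul
            (Real.one_le_sqrt.2 (by linarith : 1 ≤ 2 * r)) b (Y y)]

end OnePoint

section CanonicalFamilies

variable {ι α : Type*} [DecidableEq ι] {X : ι → Type*} {B : Type*} [NormedAddCommGroup B]
  [NormedSpace ℝ B]

/-- A strongly measurable function `h` of the coordinates in `D` only which, as a function of any
single one of these coordinates, is integrable with mean zero. -/
structure IsCanonicalOn [∀ i, MeasurableSpace (X i)] (μ : ∀ i, Measure (X i)) (D : Finset ι)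
    (h : (∀ i, X i) → B) : Prop where
  stronglyMeasurable : StronglyMeasurable h
  dependsOn : DependsOn h D
  integrable_update : ∀ v ∈ D, ∀ x, Integrable (fun y ↦ h (Function.update x v y)) (μ v)
  integral_update_eq_zero : ∀ v ∈ D, ∀ x, ∫ y, h (Function.update x v y) ∂μ v = 0

/-- The sum of the functions `h a`, `a ∈ s`, in which every coordinate from `A` has been given
the weight `t`: the summand `h a`, a function of the coordinates in `D a`, is multiplied by `t`
once for each coordinate in `D a ∩ A`. It interpolates between `∑ a ∈ s, h a` for `A = ∅` and the
fully dilated sum for `A = univ`. -/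
def dilatedSum (t : ℝ) (s : Finset α) (D : α → Finset ι) (h : α → (∀ i, X i) → B)
    (A : Finset ι) (x : ∀ i, X i) : B :=
  ∑ a ∈ s, t ^ #(D a ∩ A) • h a x

variable {t : ℝ} {s : Finset α} {D : α → Finset ι} {h : α → (∀ i, X i) → B}
  {A : Finset ι} {v : ι} {x : ∀ i, X i}

theorem dilatedSum_empty : dilatedSum t s D h ∅ x = ∑ a ∈ s, h a x := by
  simp [dilatedSum]

theorem dilatedSum_univ_of_card_eq [Fintype ι] {d : ℕ} (hd : ∀ a ∈ s, #(D a) = d) :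
    dilatedSum t s D h univ x = t ^ d • ∑ a ∈ s, h a x := by
  rw [dilatedSum, smul_sum]
  refine sum_congr rfl fun a ha ↦ ?_
  rw [inter_univ, hd a ha]

theorem dilatedSum_filter_add_filter_not (p : α → Prop) [DecidablePred p] :
    dilatedSum t {a ∈ s | p a} D h A x + dilatedSum t {a ∈ s | ¬p a} D h A x =
      dilatedSum t s D h A x :=
  sum_filter_add_sum_filter_not s p _

theorem dilatedSum_insert_of_forall_notMem (hv : ∀ a ∈ s, v ∉ D a) :
    dilatedSum t s D h (insert v A) x = dilatedSum t s D h A x :=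
  sum_congr rfl fun a ha ↦ by rw [inter_insert_of_notMem (hv a ha)]

theorem dilatedSum_insert_of_forall_mem (hvA : v ∉ A) (hv : ∀ a ∈ s, v ∈ D a) :
    dilatedSum t s D h (insert v A) x = t • dilatedSum t s D h A x := by
  rw [dilatedSum, dilatedSum, smul_sum]
  refine sum_congr rfl fun a ha ↦ ?_
  rw [inter_insert_of_mem (hv a ha), card_insert_of_notMem (by simp [hvA]), pow_succ', mul_smul]

theorem dilatedSum_update_of_forall_notMem (hh : ∀ a ∈ s, DependsOn (h a) (D a))
    (hv : ∀ a ∈ s, v ∉ D a) (y : X v) :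
    dilatedSum t s D h A (Function.update x v y) = dilatedSum t s D h A x :=
  sum_congr rfl fun a ha ↦ by
    rw [hh a ha fun i hi ↦ Function.update_of_ne (by rintro rfl; exact hv a ha hi) y x]

theorem norm_dilatedSum_le {d : ℕ} {κ : ℝ} (ht : 1 ≤ t) (hvA : v ∉ A) (hv : ∀ a ∈ s, v ∈ D a)
    (hd : ∀ a ∈ s, #(D a) = d) (hκ : ∀ a ∈ s, ‖h a x‖ ≤ κ) :
    ‖dilatedSum t s D h A x‖ ≤ #s * (t ^ (d - 1) * κ) := by
  rw [← nsmul_eq_mul, ← sum_const]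
  refine norm_sum_le_of_le _ fun a ha ↦ ?_
  have hcard : #(D a ∩ A) ≤ d - 1 := by
    rw [← hd a ha, ← card_erase_of_mem (hv a ha)]
    refine card_le_card fun i hi ↦ ?_
    obtain ⟨hiD, hiA⟩ := mem_inter.1 hi
    exact mem_erase.2 ⟨by rintro rfl; exact hvA hiA, hiD⟩
  rw [norm_smul, norm_pow, Real.norm_of_nonneg (by linarith)]
  gcongr
  exact hκ a ha

variable [∀ i, MeasurableSpace (X i)] {μ : ∀ i, Measure (X i)}

theorem stronglyMeasurable_dilatedSum (hh : ∀ a ∈ s, StronglyMeasurable (h a)) :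
    StronglyMeasurable (dilatedSum t s D h A) :=
  Finset.stronglyMeasurable_fun_sum _ fun a ha ↦ (hh a ha).const_smul _

theorem integrable_dilatedSum_update (hh : ∀ a ∈ s, IsCanonicalOn μ (D a) (h a))
    (hv : ∀ a ∈ s, v ∈ D a) :
    Integrable (fun y ↦ dilatedSum t s D h A (Function.update x v y)) (μ v) :=
  integrable_finsetSum _ fun a ha ↦ ((hh a ha).integrable_update v (hv a ha) x).smul _

theorem integral_dilatedSum_update_eq_zero (hh : ∀ a ∈ s, IsCanonicalOn μ (D a) (h a))
    (hv : ∀ a ∈ s, v ∈ D a) :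
    ∫ y, dilatedSum t s D h A (Function.update x v y) ∂μ v = 0 := by
  simp only [dilatedSum]
  rw [integral_finsetSum _ fun a ha ↦ ((hh a ha).integrable_update v (hv a ha) x).fun_smul _]
  refine sum_eq_zero fun a ha ↦ ?_
  rw [integral_smul, (hh a ha).integral_update_eq_zero v (hv a ha) x, smul_zero]

variable [∀ i, IsProbabilityMeasure (μ i)] [CompleteSpace B] {r K : ℝ}

theorem eLpNorm_norm_dilatedSum_update_add_le (hr : 2 ≤ r)
    (hh : ∀ a ∈ s, IsCanonicalOn μ (D a) (h a)) (hvA : v ∉ A)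
    (hK : ∀ x, r * ‖dilatedSum √(2 * r) {a ∈ s | v ∈ D a} D h A x‖ ≤ K) (x : ∀ i, X i) :
    eLpNorm (fun y ↦ ‖dilatedSum √(2 * r) s D h A (Function.update x v y)‖ + K)
        (.ofReal r) (μ v) ≤
      eLpNorm (fun y ↦ ‖dilatedSum √(2 * r) s D h (insert v A) (Function.update x v y)‖ + K)
        2 (μ v) := by
  have hmem : ∀ a ∈ {a ∈ s | v ∈ D a}, v ∈ D a := fun a ha ↦ (mem_filter.1 ha).2
  have hnotMem : ∀ a ∈ {a ∈ s | v ∉ D a}, v ∉ D a := fun a ha ↦ (mem_filter.1 ha).2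
  have hcan : ∀ a ∈ {a ∈ s | v ∈ D a}, IsCanonicalOn μ (D a) (h a) :=
    fun a ha ↦ hh a (mem_filter.1 ha).1
  have hdep : ∀ a ∈ {a ∈ s | v ∉ D a}, DependsOn (h a) (D a) :=
    fun a ha ↦ (hh a (mem_filter.1 ha).1).dependsOn
  simp_rw [← dilatedSum_filter_add_filter_not (s := s) (v ∈ D ·),
    dilatedSum_insert_of_forall_mem hvA hmem, dilatedSum_insert_of_forall_notMem hnotMem,
    dilatedSum_update_of_forall_notMem hdep hnotMem, add_comm _ (dilatedSum _ _ _ _ _ x)]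
  exact eLpNorm_norm_add_le hr (integrable_dilatedSum_update hcan hmem)
    (integral_dilatedSum_update_eq_zero hcan hmem) (fun y ↦ hK _) _

theorem eLpNorm_norm_sum_add_le [Fintype ι] (hr : 2 ≤ r)
    (hh : ∀ a ∈ s, IsCanonicalOn μ (D a) (h a))
    (hK : ∀ A v, v ∉ A → ∀ x, r * ‖dilatedSum √(2 * r) {a ∈ s | v ∈ D a} D h A x‖ ≤ K) :
    eLpNorm (fun x ↦ ‖∑ a ∈ s, h a x‖ + K) (.ofReal r) (Measure.pi μ) ≤
      eLpNorm (fun x ↦ ‖dilatedSum √(2 * r) s D h univ x‖ + K) 2 (Measure.pi μ) := by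
  have hmeas (A : Finset ι) : StronglyMeasurable fun x ↦ ‖dilatedSum √(2 * r) s D h A x‖ + K :=
    (stronglyMeasurable_dilatedSum fun a ha ↦ (hh a ha).stronglyMeasurable).norm.add_const K
  have h2r : 2 ≤ ENNReal.ofReal r := by simpa using ENNReal.ofReal_le_ofReal hr
  simpa only [dilatedSum_empty] using
    eLpNorm_pi_le_of_forall_update two_ne_zero h2r ENNReal.ofReal_ne_top hmeas
      fun A v hvA ↦ eLpNorm_norm_dilatedSum_update_add_le hr hh hvA (hK A v hvA)

theorem eLpNorm_sum_le_of_isCanonicalOn [Fintype ι] {d N : ℕ} {κ : ℝ} (hr : 2 ≤ r)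
    (hh : ∀ a ∈ s, IsCanonicalOn μ (D a) (h a)) (hd : ∀ a ∈ s, #(D a) = d)
    (hN : ∀ v, #{a ∈ s | v ∈ D a} ≤ N) (hκ0 : 0 ≤ κ) (hκ : ∀ a ∈ s, ∀ x, ‖h a x‖ ≤ κ) :
    eLpNorm (fun x ↦ ∑ a ∈ s, h a x) (.ofReal r) (Measure.pi μ) ≤
      .ofReal (√(2 * r) ^ d) * eLpNorm (fun x ↦ ∑ a ∈ s, h a x) 2 (Measure.pi μ) +
        .ofReal (r * (N * (√(2 * r) ^ (d - 1) * κ))) := by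
  have ht : 1 ≤ √(2 * r) := Real.one_le_sqrt.2 (by linarith)
  set K := r * (N * (√(2 * r) ^ (d - 1) * κ)) with hK_def
  have hK0 : 0 ≤ K := by positivity
  have hK (A : Finset ι) (v : ι) (hvA : v ∉ A) (x : ∀ i, X i) :
      r * ‖dilatedSum √(2 * r) {a ∈ s | v ∈ D a} D h A x‖ ≤ K := by
    rw [hK_def]
    gcongr
    refine (norm_dilatedSum_le ht hvA (fun a ha ↦ (mem_filter.1 ha).2)
      (fun a ha ↦ hd a (mem_filter.1 ha).1)
      fun a ha ↦ hκ a (mem_filter.1 ha).1 x).trans ?_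
    gcongr
    exact hN v
  have hmeas : StronglyMeasurable fun x ↦ ‖√(2 * r) ^ d • ∑ a ∈ s, h a x‖ :=
    ((Finset.stronglyMeasurable_fun_sum _ fun a ha ↦
      (hh a ha).stronglyMeasurable).const_smul _).norm
  calc eLpNorm (fun x ↦ ∑ a ∈ s, h a x) (.ofReal r) (Measure.pi μ)
      ≤ eLpNorm (fun x ↦ ‖∑ a ∈ s, h a x‖ + K) (.ofReal r) (Measure.pi μ) :=
        eLpNorm_mono_real fun x ↦ le_add_of_nonneg_right hK0
    _ ≤ eLpNorm (fun x ↦ ‖√(2 * r) ^ d • ∑ a ∈ s, h a x‖ + K) 2 (Measure.pi μ) := by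
        simpa only [dilatedSum_univ_of_card_eq hd] using eLpNorm_norm_sum_add_le hr hh hK
    _ ≤ eLpNorm (fun x ↦ ‖√(2 * r) ^ d • ∑ a ∈ s, h a x‖) 2 (Measure.pi μ) +
          eLpNorm (fun _ ↦ K) 2 (Measure.pi μ) :=
        eLpNorm_add_le hmeas.aestronglyMeasurable aestronglyMeasurable_const one_le_two
    _ = _ := by
        rw [eLpNorm_norm, eLpNorm_const K two_ne_zero (IsProbabilityMeasure.ne_zero _),
          measure_univ, ENNReal.one_rpow, mul_one, Real.enorm_of_nonneg hK0]
        congr 1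
        refine (eLpNorm_const_smul _ (fun x ↦ ∑ a ∈ s, h a x) 2 _).trans ?_
        rw [Real.enorm_of_nonneg (by positivity)]

end CanonicalFamilies

section DecoupledSums

variable {J I S B : Type*} [NormedAddCommGroup B]

/-- The decoupled `U`-type sum of a kernel `H` over a set `s` of multi-indices, evaluated on the
array `ω`. -/
def decoupledSum (s : Finset (J → I)) (H : (J → S) → B) (ω : J → I → S) : B :=
  ∑ i ∈ s, H fun j ↦ ω j (i j)

theorem norm_decoupledSum_le {H : (J → S) → B} {κ : ℝ} (s : Finset (J → I))
    (hκ : ∀ x, ‖H x‖ ≤ κ) (ω : J → I → S) : ‖decoupledSum s H ω‖ ≤ #s * κ := by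
  rw [← nsmul_eq_mul, ← sum_const]
  exact norm_sum_le_of_le _ fun _ _ ↦ hκ _

theorem stronglyMeasurable_decoupledSum [MeasurableSpace S] {H : (J → S) → B}
    (s : Finset (J → I)) (hH : StronglyMeasurable H) :
    StronglyMeasurable (decoupledSum s H) :=
  Finset.stronglyMeasurable_fun_sum _ fun _ _ ↦ hH.comp_measurable (by fun_prop)

variable [Fintype J]

/-- The coordinates `(j, i j)` of a decoupled array `X : J × I → S` which enter the value of a
kernel at the multi-index `i`. -/
def multiIndexGraph (i : J → I) : Finset (J × I) :=
  univ.map ⟨fun j ↦ (j, i j), fun _ _ h ↦ congrArg Prod.fst h⟩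

theorem mem_multiIndexGraph {i : J → I} {v : J × I} : v ∈ multiIndexGraph i ↔ i v.1 = v.2 := by
  constructor
  · intro hv
    obtain ⟨j, -, rfl⟩ := mem_map.1 hv
    rfl
  · exact fun hv ↦ mem_map.2 ⟨v.1, mem_univ _, Prod.ext rfl hv⟩

theorem card_multiIndexGraph (i : J → I) : #(multiIndexGraph i) = Fintype.card J := by
  simp [multiIndexGraph]

theorem card_filter_mem_multiIndexGraph_le [Fintype I] [DecidableEq J] [DecidableEq I]
    (s : Finset (J → I)) (v : J × I) :
    #{i ∈ s | v ∈ multiIndexGraph i} ≤ Fintype.card I ^ (Fintype.card J - 1) := by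
  rw [← card_univ (α := I), ← Fintype.card_filter_piFinset_const_eq_of_mem _ v.1 (mem_univ v.2)]
  simp only [mem_multiIndexGraph, Fintype.piFinset_univ]
  exact card_le_card (filter_subset_filter _ (subset_univ s))

variable [MeasurableSpace S] {P : Measure S}

theorem measurePreserving_curry_pi [Fintype I] [IsProbabilityMeasure P] :
    MeasurePreserving (MeasurableEquiv.curry J I S) (Measure.pi fun _ : J × I ↦ P)
      (Measure.pi fun _ : J ↦ Measure.pi fun _ : I ↦ P) where
  measurable := (MeasurableEquiv.curry J I S).measurable
  map_eq := by
    simpa only [Measure.infinitePi_eq_pi] using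
      Measure.infinitePi_map_curry fun (_ : J) (_ : I) ↦ P

variable [DecidableEq J] [NormedSpace ℝ B] {H : (J → S) → B}

theorem isCanonicalOn_multiIndexGraph [DecidableEq I] (hH : StronglyMeasurable H)
    (hH_int : ∀ j x, Integrable (fun y ↦ H (Function.update x j y)) P)
    (hH_can : ∀ j x, ∫ y, H (Function.update x j y) ∂P = 0) (i : J → I) :
    IsCanonicalOn (fun _ ↦ P) (multiIndexGraph i) fun x : J × I → S ↦ H fun j ↦ x (j, i j) := by
  have hupdate (j : J) (x : J × I → S) (y : S) :
      (fun j' ↦ Function.update x (j, i j) y (j', i j')) =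
        Function.update (fun j' ↦ x (j', i j')) j y :=
    Function.update_comp_eq_of_injective x (f := fun j ↦ (j, i j))
      (fun _ _ h ↦ congrArg Prod.fst h) j y
  constructor
  case stronglyMeasurable => exact hH.comp_measurable (by fun_prop)
  case dependsOn =>
    exact fun x y hxy ↦ congrArg H (funext fun j ↦ hxy (j, i j) (mem_multiIndexGraph.2 rfl))
  all_goals
    rintro ⟨j, l⟩ hv x
    obtain rfl : i j = l := mem_multiIndexGraph.1 hv
    simp only [hupdate]
  · exact hH_int j _
  · exact hH_can j _

theorem eLpNorm_decoupledSum_le [Fintype I] [CompleteSpace B] [IsProbabilityMeasure P]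
    {r κ : ℝ} (hr : 2 ≤ r) (s : Finset (J → I))
    (hH : StronglyMeasurable H) (hκ : ∀ x, ‖H x‖ ≤ κ)
    (hH_can : ∀ j x, ∫ y, H (Function.update x j y) ∂P = 0) :
    eLpNorm (decoupledSum s H) (.ofReal r) (Measure.pi fun _ ↦ Measure.pi fun _ ↦ P) ≤
      .ofReal (√(2 * r) ^ Fintype.card J) *
          eLpNorm (decoupledSum s H) 2 (Measure.pi fun _ ↦ Measure.pi fun _ ↦ P) +
        .ofReal (r * ((Fintype.card I : ℝ) ^ (Fintype.card J - 1) *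
          (√(2 * r) ^ (Fintype.card J - 1) * κ))) := by
  classical
  obtain ⟨y⟩ := P.nonempty_of_neZero
  have hκ0 : 0 ≤ κ := (norm_nonneg _).trans (hκ fun _ ↦ y)
  have hH_int (j : J) (x : J → S) : Integrable (fun y ↦ H (Function.update x j y)) P :=
    .of_bound (hH.comp_measurable (measurable_update x)).aestronglyMeasurable κ
      (.of_forall fun _ ↦ hκ _)
  have hcurry (p : ℝ≥0∞) := eLpNorm_comp_measurePreserving (p := p)
    (stronglyMeasurable_decoupledSum s hH).aestronglyMeasurable
    (measurePreserving_curry_pi (J := J) (I := I) (P := P))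
  rw [← hcurry, ← hcurry, ← Nat.cast_pow]
  exact eLpNorm_sum_le_of_isCanonicalOn hr
    (fun i _ ↦ isCanonicalOn_multiIndexGraph hH hH_int hH_can i)
    (fun i _ ↦ card_multiIndexGraph i) (card_filter_mem_multiIndexGraph_le s) hκ0
    fun _ _ _ ↦ hκ _

end DecoupledSums

section Moments

theorem integral_norm_rpow_le_of_eLpNorm_le {Ω E : Type*} [MeasurableSpace Ω]
    [NormedAddCommGroup E] {μ : Measure Ω} {f : Ω → E} {r c : ℝ} (hr : 0 < r) (hc : 0 ≤ c)
    (hf : AEStronglyMeasurable f μ) (h : eLpNorm f (.ofReal r) μ ≤ .ofReal c) :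
    ∫ ω, ‖f ω‖ ^ r ∂μ ≤ c ^ r := by
  have hmem : MemLp f (.ofReal r) μ := ⟨hf, h.trans_lt ENNReal.ofReal_lt_top⟩
  rwa [hmem.eLpNorm_eq_integral_rpow_norm (by simpa using hr) ENNReal.ofReal_ne_top,
    ENNReal.ofReal_le_ofReal_iff hc, ENNReal.toReal_ofReal hr.le,
    Real.rpow_inv_le_iff_of_pos (integral_nonneg fun ω ↦ by positivity) hc hr] at h

theorem eLpNorm_two_eq_sqrt_integral {Ω E : Type*} [MeasurableSpace Ω]
    [NormedAddCommGroup E] {μ : Measure Ω} {f : Ω → E} (hf : MemLp f 2 μ) :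
    eLpNorm f 2 μ = .ofReal √(∫ ω, ‖f ω‖ ^ 2 ∂μ) := by
  simp [hf.eLpNorm_eq_integral_rpow_norm two_ne_zero ENNReal.ofNat_ne_top, Real.sqrt_eq_rpow]

theorem sqrt_pow_rpow {r : ℝ} (hr : 0 ≤ r) (m : ℕ) (s : ℝ) :
    (√r ^ m) ^ s = r ^ ((m : ℝ) * s / 2) := by
  rw [Real.sqrt_eq_rpow, ← Real.rpow_mul_natCast hr, ← Real.rpow_mul hr]
  congr 1
  ring

theorem add_rpow_le_two_rpow_mul_rpow_add_rpow {a b r : ℝ} (ha : 0 ≤ a) (hb : 0 ≤ b)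
    (hr : 0 ≤ r) : (a + b) ^ r ≤ 2 ^ r * (a ^ r + b ^ r) := by
  lift a to NNReal using ha
  lift b to NNReal using hb
  have h := ENNReal.add_rpow_le_two_rpow_mul_rpow_add_rpow (a : ℝ≥0∞) b hr
  simp only [← ENNReal.coe_add, ← ENNReal.coe_ofNat, ← ENNReal.coe_rpow_of_nonneg _ hr] at h
  exact_mod_cast h

theorem sqrt_pow_mul_add_rpow_le {k n : ℕ} (hk : 1 ≤ k) {r χ κ : ℝ} (hr : 0 ≤ r) (hχ : 0 ≤ χ)
    (hκ : 0 ≤ κ) :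
    (√(2 * r) ^ k * χ + r * ((n : ℝ) ^ (k - 1) * (√(2 * r) ^ (k - 1) * κ))) ^ r ≤
      (2 * √2 ^ k) ^ r * (r ^ ((k : ℝ) * r / 2) * χ ^ r +
        r ^ (((k : ℝ) + 1) * r / 2) * (n : ℝ) ^ (((k : ℝ) - 1) * r) * κ ^ r) := by
  have hsqrt2 : 1 ≤ √2 := Real.one_le_sqrt.2 one_le_two
  have hr_pow : r * √r ^ (k - 1) = √r ^ (k + 1) := by
    rw [← Nat.sub_add_cancel hk, Nat.add_sub_cancel, pow_add, pow_succ √r, mul_assoc]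
    nth_rw 1 [← Real.mul_self_sqrt hr]
    ring
  have hn_pow : ((n : ℝ) ^ (k - 1)) ^ r = (n : ℝ) ^ (((k : ℝ) - 1) * r) := by
    rw [← Real.rpow_natCast_mul n.cast_nonneg, Nat.cast_pred hk]
  have hfactor : √(2 * r) ^ k * χ + r * ((n : ℝ) ^ (k - 1) * (√(2 * r) ^ (k - 1) * κ)) ≤
      √2 ^ k * (√r ^ k * χ + √r ^ (k + 1) * (n : ℝ) ^ (k - 1) * κ) := calc
    _ = √2 ^ k * (√r ^ k * χ) + √2 ^ (k - 1) * (√r ^ (k + 1) * (n : ℝ) ^ (k - 1) * κ) := by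
      rw [← hr_pow, Real.sqrt_mul zero_le_two, mul_pow, mul_pow]
      ring
    _ ≤ _ := by
      rw [mul_add]
      gcongr
      exact Nat.sub_le k 1
  calc _ ≤ (√2 ^ k * (√r ^ k * χ + √r ^ (k + 1) * (n : ℝ) ^ (k - 1) * κ)) ^ r := by gcongr
    _ = (√2 ^ k) ^ r * (√r ^ k * χ + √r ^ (k + 1) * (n : ℝ) ^ (k - 1) * κ) ^ r :=
      Real.mul_rpow (by positivity) (by positivity)
    _ ≤ (√2 ^ k) ^ r * (2 ^ r * ((√r ^ k * χ) ^ r +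
          (√r ^ (k + 1) * (n : ℝ) ^ (k - 1) * κ) ^ r)) := by
      gcongr
      exact add_rpow_le_two_rpow_mul_rpow_add_rpow (by positivity) (by positivity) hr
    _ = _ := by
      rw [Real.mul_rpow (x := √r ^ k) (by positivity) hχ,
        Real.mul_rpow (y := κ) (by positivity) hκ,
        Real.mul_rpow (x := √r ^ (k + 1)) (by positivity) (by positivity), hn_pow,
        sqrt_pow_rpow hr, sqrt_pow_rpow hr, Nat.cast_succ,
        Real.mul_rpow zero_le_two (by positivity)]
      ring

end Moments

theorem stmt2_general {k n : ℕ} (hk : 1 ≤ k) {S B : Type*} [MeasurableSpace S]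
    [NormedAddCommGroup B] [NormedSpace ℝ B] [CompleteSpace B] {P : Measure S}
    [IsProbabilityMeasure P] (s : Finset (Fin k → Fin n)) {H : (Fin k → S) → B}
    (hH : StronglyMeasurable H)
    (hH_can : ∀ (j : Fin k) (x : Fin k → S), ∫ y, H (Function.update x j y) ∂P = 0)
    {κ χ : ℝ} (hκ : ∀ x, ‖H x‖ ≤ κ)
    (hχ : √(∫ ω : Fin k → Fin n → S, ‖∑ i ∈ s, H (fun j ↦ ω j (i j))‖ ^ 2
      ∂(Measure.pi fun _ ↦ Measure.pi fun _ ↦ P)) ≤ χ)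
    {r : ℝ} (hr : 2 ≤ r) :
    ∫ ω : Fin k → Fin n → S, ‖∑ i ∈ s, H (fun j ↦ ω j (i j))‖ ^ r
        ∂(Measure.pi fun _ ↦ Measure.pi fun _ ↦ P) ≤
      (2 * √2 ^ k) ^ r * (r ^ ((k : ℝ) * r / 2) * χ ^ r +
        r ^ (((k : ℝ) + 1) * r / 2) * (n : ℝ) ^ (((k : ℝ) - 1) * r) * κ ^ r) := by
  obtain ⟨y⟩ := P.nonempty_of_neZero
  have hr0 : 0 < r := by linarith
  have hκ0 : 0 ≤ κ := (norm_nonneg _).trans (hκ fun _ ↦ y)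
  have hχ0 : 0 ≤ χ := (Real.sqrt_nonneg _).trans hχ
  have hmeas := (stronglyMeasurable_decoupledSum s hH).aestronglyMeasurable
    (μ := Measure.pi fun _ ↦ Measure.pi fun _ ↦ P)
  have hL2 := eLpNorm_two_eq_sqrt_integral <|
    MemLp.of_bound hmeas _ (.of_forall (norm_decoupledSum_le s hκ))
  refine (integral_norm_rpow_le_of_eLpNorm_le hr0 (by positivity) hmeas ?_).trans
    (sqrt_pow_mul_add_rpow_le hk hr0.le hχ0 hκ0)
  refine (eLpNorm_decoupledSum_le hr s hH hκ hH_can).trans ?_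
  rw [hL2, ENNReal.ofReal_add (by positivity) (by positivity),
    ENNReal.ofReal_mul (p := √(2 * r) ^ k) (by positivity), Fintype.card_fin, Fintype.card_fin]
  gcongr
  exact hχ

/-- (Theorem 10, decoupled moment inequality.) Let `B` be a separable Banach
space, `H : S^k → B` bounded, symmetric and `P`-canonical, and let `X_i^{(j)}` be a decoupled
i.i.d. array with law `P`. If `κ ≥ sup ‖H‖` and `χ_n ≥ (E‖Σ_{i ∈ I_n^k}
H(X_{i_1}^{(1)},…,X_{i_k}^{(k)})‖²)^{1/2}`, then there is a constant `C` depending only on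
`k` such that for all `n` and `r ≥ 2`,
`E‖Σ_{i ∈ I_n^k} H(X_{i_1}^{(1)},…,X_{i_k}^{(k)})‖^r
  ≤ C^r [r^{kr/2} χ_n^r + r^{(k+1)r/2} n^{(k−1)r} κ^r + r^{kr} κ^r]`. -/
theorem stmt2 (k : ℕ) (hk : 1 ≤ k) :
    ∃ C : ℝ, 0 < C ∧
      ∀ (B : Type) [NormedAddCommGroup B] [NormedSpace ℝ B] [CompleteSpace B]
        [SecondCountableTopology B],
      ∀ (S : Type) (_ : MeasurableSpace S), Nonempty S →
      ∀ (P : Measure S), IsProbabilityMeasure P →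
      ∀ H : (Fin k → S) → B, StronglyMeasurable H →
        (∀ (τ : Equiv.Perm (Fin k)) (x : Fin k → S), H (x ∘ τ) = H x) →
        (∀ (j : Fin k) (x : Fin k → S), (∫ y, H (Function.update x j y) ∂P) = 0) →
      ∀ (n : ℕ) (κ χ : ℝ),
        (∀ x, ‖H x‖ ≤ κ) →
        Real.sqrt (∫ ω : Fin k → Fin n → S,
            ‖∑ i ∈ injTuples k n, H (fun j => ω j (i j))‖ ^ 2
          ∂(Measure.pi fun _ : Fin k => (Measure.pi fun _ : Fin n => P))) ≤ χ →
      ∀ r : ℝ, 2 ≤ r →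
        (∫ ω : Fin k → Fin n → S,
            ‖∑ i ∈ injTuples k n, H (fun j => ω j (i j))‖ ^ r
          ∂(Measure.pi fun _ : Fin k => (Measure.pi fun _ : Fin n => P))) ≤
        C ^ r * (r ^ ((k : ℝ) * r / 2) * χ ^ r +
          r ^ (((k : ℝ) + 1) * r / 2) * (n : ℝ) ^ (((k : ℝ) - 1) * r) * κ ^ r +
          r ^ ((k : ℝ) * r) * κ ^ r) := by
  refine ⟨2 * √2 ^ k, by positivity, ?_⟩
  intro B _ _ _ _ S _ _ P _ H hH _ hH_can n κ χ hκ hχ r hr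
  have hκ0 : 0 ≤ κ := (norm_nonneg _).trans (hκ fun _ ↦ Classical.arbitrary S)
  refine (stmt2_general hk (injTuples k n) hH hH_can hκ hχ hr).trans ?_
  exact mul_le_mul_of_nonneg_left (le_add_of_nonneg_right (by positivity)) (by positivity)
end
end
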